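/- arXiv:2604.15824 — 5 statements merged into one kernel-verified Lean document; each statement's English description precedes it below -/
import Mathlib

section
/- Let G be a 3-connected simple graph of odd order. If G has at least two vertices of even degree, then G is odd 3-edge-colorable. -/
/-- The degree of vertex `v` in the color class `i` of the edge-coloring `c` of `G`. -/
noncomputable def classDeg {V : Type*} (G : SimpleGraph V) {k : ℕ}
    (c : Sym2 V → Fin k) (i : Fin k) (v : V) : ℕ :=
  {e : Sym2 V | e ∈ G.edgeSet ∧ c e = i ∧ v ∈ e}.ncard

/-- `G` is odd `k`-edge-colorable: there is an edge-coloring with `k` colors such that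
every vertex incident to an edge of a color class has odd degree in that class. -/
def OddEdgeColorable {V : Type*} (G : SimpleGraph V) (k : ℕ) : Prop :=
  ∃ c : Sym2 V → Fin k, ∀ (i : Fin k) (v : V),
    classDeg G c i v ≠ 0 → Odd (classDeg G c i v)

/-- `G` is `k`-connected: it has more than `k` vertices and remains connected
after deleting any set of fewer than `k` vertices. -/
def IsKConnected {V : Type*} [Fintype V] (G : SimpleGraph V) (k : ℕ) : Prop :=
  k < Fintype.card V ∧ ∀ s : Set V, s.ncard < k → (G.induce sᶜ).Connected

/-!
Among the connected vertex sets whose deletion leaves two even-degree vertices in one component,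
choose `B` maximal. By 3-connectivity every vertex outside `B` has a neighbor in `B`, so by
maximality the deletion of any further vertex separates all even-degree vertices outside `B`. Hence
`G - B` is an induced path whose ends `u` and `v` are the only even-degree vertices outside `B`, and
every vertex of the path has an odd number of neighbors in `B`.

The first color class consists of the edges between `B` and the path, except those at `u`, and of
the edges inside `B` not in a forest `F`. A `T`-join in a spanning tree of `G[B]` provides an `F`
for which all degrees are odd at the vertices of `B` but a root, where the handshake lemma gives the
same since the order is odd. The forest `F` with the edges from `u` to `B`, and likewise the path,
splits into two odd classes except that the parity at `u` is uncontrolled. As `u` has odd degree in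
both parts, interchanging the two colors on the path, if necessary, makes both classes odd at `u`.
-/

open scoped symmDiff

section Restriction

variable {V : Type*} {G : SimpleGraph V} {S T : Set V} {a b : V}

/-- The subgraph of `G` induced on `S`, kept on the whole vertex type, so that vertices outside `S`
become isolated. -/
def restrictTo (G : SimpleGraph V) (S : Set V) : SimpleGraph V where
  Adj a b := G.Adj a b ∧ a ∈ S ∧ b ∈ S
  symm := ⟨fun _ _ h => ⟨h.1.symm, h.2.2, h.2.1⟩⟩
  loopless := ⟨fun _ h => h.1.ne rfl⟩

lemma restrictTo_le (G : SimpleGraph V) (S : Set V) : restrictTo G S ≤ G :=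
  fun _ _ h => h.1

lemma restrictTo_mono (h : S ⊆ T) : restrictTo G S ≤ restrictTo G T :=
  fun _ _ hab => ⟨hab.1, h hab.2.1, h hab.2.2⟩

lemma neighborSet_restrictTo_of_mem {x : V} (hx : x ∈ S) :
    (restrictTo G S).neighborSet x = G.neighborSet x ∩ S := by
  ext y
  simp [restrictTo, hx]

lemma neighborSet_restrictTo_of_notMem {x : V} (hx : x ∉ S) :
    (restrictTo G S).neighborSet x = ∅ := by
  ext y
  simp [restrictTo, hx]

lemma neighborSet_eq_empty_of_le_restrictTo {F : SimpleGraph V} (hF : F ≤ restrictTo G S)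
    {x : V} (hx : x ∉ S) : F.neighborSet x = ∅ :=
  Set.subset_eq_empty (SimpleGraph.neighborSet_mono hF x) (neighborSet_restrictTo_of_notMem hx)

lemma reachable_restrictTo_of_walk (p : G.Walk a b) (hp : ∀ x ∈ p.support, x ∈ S) :
    (restrictTo G S).Reachable a b := by
  refine ⟨p.transfer _ fun e he => ?_⟩
  induction e with
  | _ x y =>
    exact ⟨p.adj_of_mem_edges he, hp _ (p.fst_mem_support_of_mem_edges he),
      hp _ (p.snd_mem_support_of_mem_edges he)⟩

lemma mem_of_mem_support_restrictTo (p : (restrictTo G S).Walk a b) (hab : a ≠ b) {x : V}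
    (hx : x ∈ p.support) : x ∈ S := by
  obtain ⟨e, he, hxe⟩ :=
    (SimpleGraph.Walk.mem_support_iff_exists_mem_edges_of_not_nil
      (SimpleGraph.Walk.not_nil_of_ne hab)).1 hx
  obtain ⟨y, rfl⟩ := Sym2.mem_iff_exists.1 hxe
  exact (p.adj_of_mem_edges he).2.1

end Restriction

section ConnectedOn

variable {V : Type*} {G : SimpleGraph V} {C : Set V} {a : V}

/-- `G[C]` is preconnected. -/
def ConnectedOn (G : SimpleGraph V) (C : Set V) : Prop :=
  ∀ a ∈ C, ∀ b ∈ C, (restrictTo G C).Reachable a b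

lemma ConnectedOn.insert_of_neighbor (hC : ConnectedOn G C) (ha : (G.neighborSet a ∩ C).Nonempty) :
    ConnectedOn G (insert a C) := by
  obtain ⟨c, hac, hc⟩ := ha
  have hreach (x : V) (hx : x ∈ insert a C) : (restrictTo G (insert a C)).Reachable c x := by
    rcases hx with rfl | hx
    · exact SimpleGraph.Adj.reachable ⟨hac.symm, .inr hc, .inl rfl⟩
    · exact (hC c hc x hx).mono (restrictTo_mono (Set.subset_insert a C))
  exact fun x hx y hy => (hreach x hx).symm.trans (hreach y hy)

lemma connectedOn_setOf_reachable_restrictTo (G : SimpleGraph V) (S : Set V) (a : V) :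
    ConnectedOn G {x | (restrictTo G S).Reachable a x} := by
  classical
  have hreach (x : V) (hx : (restrictTo G S).Reachable a x) :
      (restrictTo G {x | (restrictTo G S).Reachable a x}).Reachable a x := by
    obtain ⟨p⟩ := hx
    refine reachable_restrictTo_of_walk (p.mapLe (restrictTo_le G S)) fun y hy => ?_
    rw [SimpleGraph.Walk.support_mapLe_eq_support] at hy
    exact ⟨p.takeUntil y hy⟩
  exact fun x hx y hy => (hreach x hx).symm.trans (hreach y hy)

end ConnectedOn

section Star

variable {V : Type*} {u : V} {T : Set V}

/-- The star with center `u` and leaf set `T \ {u}`. -/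
def starTo (u : V) (T : Set V) : SimpleGraph V :=
  SimpleGraph.fromRel fun a b => a = u ∧ b ∈ T

lemma starTo_adj {a b : V} :
    (starTo u T).Adj a b ↔ a ≠ b ∧ (a = u ∧ b ∈ T ∨ b = u ∧ a ∈ T) :=
  SimpleGraph.fromRel_adj _ a b

lemma neighborSet_starTo_center (hu : u ∉ T) : (starTo u T).neighborSet u = T := by
  ext y
  simp only [SimpleGraph.mem_neighborSet, starTo_adj]
  grind

lemma neighborSet_starTo_of_notMem {x : V} (hxu : x ≠ u) (hx : x ∉ T) :
    (starTo u T).neighborSet x = ∅ := by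
  ext y
  simp [starTo_adj, hxu, hx]

lemma starTo_le {G : SimpleGraph V} (h : T ⊆ G.neighborSet u) : starTo u T ≤ G := by
  intro a b hab
  rcases (starTo_adj.1 hab).2 with ⟨rfl, hb⟩ | ⟨rfl, ha⟩
  · exact h hb
  · exact (h ha).symm

end Star

section DegreeParity

variable {V : Type*}

/-- The degree of a vertex modulo two. -/
noncomputable def degreeParity (H : SimpleGraph V) (x : V) : ZMod 2 :=
  (H.neighborSet x).ncard

lemma degreeParity_eq_one_iff {H : SimpleGraph V} {x : V} :
    degreeParity H x = 1 ↔ Odd (H.neighborSet x).ncard :=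
  ZMod.natCast_eq_one_iff_odd

lemma degreeParity_eq_zero_iff {H : SimpleGraph V} {x : V} :
    degreeParity H x = 0 ↔ Even (H.neighborSet x).ncard :=
  ZMod.natCast_eq_zero_iff_even

lemma sum_degreeParity [Fintype V] (H : SimpleGraph V) : ∑ x, degreeParity H x = 0 := by
  classical
  have hdeg (x : V) : (H.neighborSet x).ncard = H.degree x := by
    rw [Set.ncard_eq_toFinset_card', Set.toFinset_card, SimpleGraph.card_neighborSet_eq_degree]
  simp only [degreeParity, hdeg]
  rw [← Nat.cast_sum, H.sum_degrees_eq_twice_card_edges, ZMod.natCast_eq_zero_iff_even]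
  exact even_two_mul _

lemma degreeParity_eq_one_of_odd_card [Fintype V] (hV : Odd (Fintype.card V)) {H : SimpleGraph V}
    {u r : V} (hur : u ≠ r) (hu : degreeParity H u = 0)
    (h : ∀ x, x ≠ u → x ≠ r → degreeParity H x = 1) : degreeParity H r = 1 := by
  classical
  have htotal : ∑ x, (degreeParity H x + 1) = 1 := by
    rw [Finset.sum_add_distrib, sum_degreeParity, Finset.sum_const, Finset.card_univ, nsmul_one,
      zero_add, ZMod.natCast_eq_one_iff_odd]
    exact hV
  have hterms : ∑ x, (degreeParity H x + 1) = degreeParity H u + 1 + (degreeParity H r + 1) := by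
    refine Finset.sum_eq_add u r hur (fun x _ hx => ?_) (by simp) (by simp)
    rw [h x hx.1 hx.2, CharTwo.add_self_eq_zero]
  rw [hterms, hu, zero_add] at htotal
  linear_combination htotal - CharTwo.two_eq_zero (R := ZMod 2)

lemma neighborSet_symmDiff (H K : SimpleGraph V) (x : V) :
    (H ∆ K).neighborSet x = H.neighborSet x ∆ K.neighborSet x := by
  simp only [symmDiff_def, SimpleGraph.neighborSet_sup, SimpleGraph.neighborSet_sdiff,
    Set.sup_eq_union]

lemma natCast_ncard_symmDiff_zmod_two {s t : Set V} (hs : s.Finite) (ht : t.Finite) :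
    ((s ∆ t).ncard : ZMod 2) = s.ncard + t.ncard := by
  have hst : (s ∆ t).ncard + 2 * (s ∩ t).ncard = s.ncard + t.ncard := by
    rw [Set.symmDiff_def, Set.ncard_union_eq disjoint_sdiff_sdiff hs.sdiff ht.sdiff]
    have hs' := Set.ncard_inter_add_ncard_sdiff_eq_ncard s t hs
    have ht' := Set.ncard_inter_add_ncard_sdiff_eq_ncard t s ht
    rw [Set.inter_comm] at ht'
    lia
  have htwo : (2 : ZMod 2) = 0 := rfl
  simpa [htwo] using congrArg (Nat.cast : ℕ → ZMod 2) hst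

variable [Finite V]

lemma degreeParity_symmDiff (H K : SimpleGraph V) (x : V) :
    degreeParity (H ∆ K) x = degreeParity H x + degreeParity K x := by
  rw [degreeParity, neighborSet_symmDiff,
    natCast_ncard_symmDiff_zmod_two (Set.toFinite _) (Set.toFinite _), degreeParity, degreeParity]

lemma degreeParity_sup {H K : SimpleGraph V} (h : Disjoint H K) (x : V) :
    degreeParity (H ⊔ K) x = degreeParity H x + degreeParity K x := by
  rw [← h.symmDiff_eq_sup, degreeParity_symmDiff]

lemma degreeParity_sdiff {H K : SimpleGraph V} (h : K ≤ H) (x : V) :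
    degreeParity (H \ K) x = degreeParity H x + degreeParity K x := by
  rw [← symmDiff_of_ge h, degreeParity_symmDiff]

end DegreeParity

section Joins

variable {V : Type*} {G : SimpleGraph V} {a b c : V}

lemma neighborSet_edge_left (h : a ≠ b) : (SimpleGraph.edge a b).neighborSet a = {b} := by
  ext x
  simp only [SimpleGraph.mem_neighborSet, SimpleGraph.edge_adj, Set.mem_singleton_iff]
  grind

lemma degreeParity_edge [DecidableEq V] (h : a ≠ b) (x : V) :
    degreeParity (SimpleGraph.edge a b) x
      = (Pi.single a 1 : V → ZMod 2) x + (Pi.single b 1 : V → ZMod 2) x := by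
  by_cases hxa : x = a
  · subst hxa
    simp [degreeParity, neighborSet_edge_left h, h]
  by_cases hxb : x = b
  · subst hxb
    rw [SimpleGraph.edge_comm, degreeParity, neighborSet_edge_left h.symm]
    simp [hxa]
  · have hempty : (SimpleGraph.edge a b).neighborSet x = ∅ := by
      ext y
      simp [SimpleGraph.edge_adj, hxa, hxb]
    simp [degreeParity, hempty, hxa, hxb]

lemma spanningCoe_toSubgraph_cons (h : G.Adj a c) (q : G.Walk c b) :
    (SimpleGraph.Walk.cons h q).toSubgraph.spanningCoe
      = q.toSubgraph.spanningCoe ⊔ SimpleGraph.edge a c := by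
  ext x y
  simp only [SimpleGraph.Subgraph.spanningCoe_adj, SimpleGraph.sup_adj, SimpleGraph.edge_adj,
    SimpleGraph.Walk.adj_toSubgraph_iff_mem_edges, SimpleGraph.Walk.edges_cons, List.mem_cons,
    Sym2.eq_iff]
  grind [h.ne]

lemma degreeParity_toSubgraph_of_isTrail [Finite V] [DecidableEq V] {p : G.Walk a b}
    (hp : p.IsTrail) (x : V) :
    degreeParity p.toSubgraph.spanningCoe x
      = (Pi.single a 1 : V → ZMod 2) x + (Pi.single b 1 : V → ZMod 2) x := by
  induction p with
  | nil =>
    rw [CharTwo.add_self_eq_zero, degreeParity_eq_zero_iff]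
    simp [SimpleGraph.neighborSet]
  | @cons a c b h q ih =>
    rw [SimpleGraph.Walk.isTrail_cons] at hp
    have hdisj : Disjoint q.toSubgraph.spanningCoe (SimpleGraph.edge a c) := by
      rw [SimpleGraph.disjoint_edge]
      simpa [SimpleGraph.Walk.adj_toSubgraph_iff_mem_edges] using hp.2
    rw [spanningCoe_toSubgraph_cons, degreeParity_sup hdisj, ih hp.1, degreeParity_edge h.ne]
    linear_combination CharTwo.add_self_eq_zero ((Pi.single c 1 : V → ZMod 2) x)

lemma isAcyclic_toSubgraph_of_isPath {p : G.Walk a b} (hp : p.IsPath) :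
    p.toSubgraph.spanningCoe.IsAcyclic := by
  induction p with
  | nil =>
    exact SimpleGraph.isAcyclic_bot.anti fun x y h => h.elim
  | @cons a c b h q ih =>
    rw [SimpleGraph.Walk.cons_isPath_iff] at hp
    rw [spanningCoe_toSubgraph_cons]
    refine (ih hp.1).sup_edge_of_not_reachable ?_
    rintro ⟨r⟩
    have hsnd := r.adj_snd (SimpleGraph.Walk.not_nil_of_ne h.ne)
    exact hp.2 (q.mem_verts_toSubgraph.1 (q.toSubgraph.edge_vert hsnd))

variable [Finite V]

lemma exists_le_degreeParity_eq_ite (r : V) (S : Finset V) [DecidableEq V]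
    (hS : ∀ x ∈ S, G.Reachable r x) :
    ∃ F ≤ G, ∀ x ≠ r, degreeParity F x = if x ∈ S then 1 else 0 := by
  induction S using Finset.induction_on with
  | empty => exact ⟨⊥, bot_le, fun x _ => by simp [degreeParity]⟩
  | insert y S hy ih =>
    obtain ⟨F, hFG, hF⟩ := ih fun x hx => hS x (Finset.mem_insert_of_mem hx)
    obtain ⟨p, hp⟩ := (hS y (Finset.mem_insert_self y S)).exists_isPath
    refine ⟨F ∆ p.toSubgraph.spanningCoe, ?_, fun x hx => ?_⟩
    · exact symmDiff_le (le_sup_of_le_right hFG)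
        (le_sup_of_le_right p.toSubgraph.spanningCoe_le)
    · rw [degreeParity_symmDiff, degreeParity_toSubgraph_of_isTrail hp.isTrail, hF x hx]
      by_cases hxy : x = y
      · subst hxy
        simp [hx, hy]
      · simp [hx, hxy]

/-- A spanning forest contains a `T`-join for every prescription of parities off the root `r`; the
parity at `r` is then forced by the handshake lemma. -/
lemma exists_isAcyclic_le_degreeParity_eq (r : V) (t : V → ZMod 2) :
    ∃ F ≤ G, F.IsAcyclic ∧ ∀ x ≠ r, G.Reachable r x → degreeParity F x = t x := by
  classical
  have := Fintype.ofFinite V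
  obtain ⟨A, hAG, hA, hreach⟩ := G.exists_isAcyclic_reachable_eq_le
  obtain ⟨F, hFA, hF⟩ := exists_le_degreeParity_eq_ite (G := A) r
    {x | A.Reachable r x ∧ t x = 1} (fun x hx => (Finset.mem_filter.1 hx).2.1)
  refine ⟨F, hFA.trans hAG, hA.anti hFA, fun x hxr hx => ?_⟩
  rw [hF x hxr]
  have hzmod : ∀ z : ZMod 2, (if z = 1 then 1 else 0) = z := by decide
  simp [hreach, hx, hzmod]

end Joins

section OddAt

variable {V : Type*} {H K L : SimpleGraph V} {x : V}

/-- The vertex `x` is isolated in `H` or has odd degree there. A color class of an odd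
edge-coloring satisfies this at every vertex. -/
def OddAt (H : SimpleGraph V) (x : V) : Prop :=
  (H.neighborSet x).ncard ≠ 0 → Odd (H.neighborSet x).ncard

lemma oddAt_of_degreeParity_eq_one (h : degreeParity H x = 1) : OddAt H x :=
  fun _ => degreeParity_eq_one_iff.1 h

lemma oddAt_congr (h : H.neighborSet x = K.neighborSet x) : OddAt H x ↔ OddAt K x := by
  rw [OddAt, OddAt, h]

/-- The partition of `K` into `L` and `K \ L` is odd at `x`; the intended use has `L ≤ K`. -/
def SplitsOddlyAt (K L : SimpleGraph V) (x : V) : Prop :=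
  OddAt L x ∧ OddAt (K \ L) x

lemma SplitsOddlyAt.sdiff (hLK : L ≤ K) (h : SplitsOddlyAt K L x) : SplitsOddlyAt K (K \ L) x :=
  ⟨h.2, by rw [sdiff_sdiff_eq_self hLK]; exact h.1⟩

end OddAt

section EdgeColoring

variable {V : Type*} {G H : SimpleGraph V} {k : ℕ}

lemma classDeg_eq_ncard_neighbors (c : Sym2 V → Fin k) (i : Fin k) (x : V) :
    classDeg G c i x = {y | G.Adj x y ∧ c s(x, y) = i}.ncard := by
  have hinj : Function.Injective fun y => s(x, y) := fun _ _ => Sym2.congr_right.1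
  rw [classDeg, ← Set.ncard_image_of_injective _ hinj]
  congr 1
  ext e
  constructor
  · rintro ⟨he, hc, hx⟩
    obtain ⟨y, rfl⟩ := Sym2.mem_iff_exists.1 hx
    exact ⟨y, ⟨he, hc⟩, rfl⟩
  · rintro ⟨y, ⟨hxy, hc⟩, rfl⟩
    exact ⟨hxy, hc, Sym2.mem_mk_left x y⟩

lemma oddEdgeColorable_one (h : ∀ x, OddAt G x) : OddEdgeColorable G 1 := by
  refine ⟨fun _ => 0, fun i x => ?_⟩
  have hclass : {y | G.Adj x y ∧ (0 : Fin 1) = i} = G.neighborSet x := by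
    ext y
    simp [Subsingleton.elim (0 : Fin 1) i]
  rw [classDeg_eq_ncard_neighbors, hclass]
  exact h x

lemma oddEdgeColorable_succ (hHG : H ≤ G) (hH : ∀ x, OddAt H x)
    (h : OddEdgeColorable (G \ H) k) : OddEdgeColorable G (k + 1) := by
  classical
  obtain ⟨c, hc⟩ := h
  refine ⟨fun e => if e ∈ H.edgeSet then 0 else (c e).succ, fun i x => ?_⟩
  rw [classDeg_eq_ncard_neighbors]
  cases i using Fin.cases with
  | zero =>
    have hclass : {y | G.Adj x y ∧ (if s(x, y) ∈ H.edgeSet then 0 else (c s(x, y)).succ) = 0}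
        = H.neighborSet x := by
      ext y
      by_cases hxy : H.Adj x y
      · simp [hxy, hHG hxy]
      · simp [hxy]
    rw [hclass]
    exact hH x
  | succ i =>
    have hclass : {y | G.Adj x y ∧ (if s(x, y) ∈ H.edgeSet then 0 else (c s(x, y)).succ) = i.succ}
        = {y | (G \ H).Adj x y ∧ c s(x, y) = i} := by
      ext y
      by_cases hxy : H.Adj x y
      · simp [hxy, (Fin.succ_ne_zero i).symm]
      · simp [hxy]
    rw [hclass, ← classDeg_eq_ncard_neighbors]
    exact hc i x

end EdgeColoring

section Splitting

variable {V : Type*}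

lemma disjoint_of_neighborSet_eq_empty {K₁ K₂ : SimpleGraph V} {u : V}
    (h : ∀ x ≠ u, K₁.neighborSet x = ∅ ∨ K₂.neighborSet x = ∅) : Disjoint K₁ K₂ := by
  have hends {a b : V} (ha : a ≠ u) (h₁ : K₁.Adj a b) (h₂ : K₂.Adj a b) : False := by
    rcases h a ha with hempty | hempty
    · exact (hempty ▸ h₁ : b ∈ (∅ : Set V))
    · exact (hempty ▸ h₂ : b ∈ (∅ : Set V))
  refine SimpleGraph.disjoint_left.2 fun a b h₁ h₂ => ?_
  by_cases ha : a = u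
  · exact hends (ha ▸ h₁.ne') h₁.symm h₂.symm
  · exact hends ha h₁ h₂

variable [Finite V]

lemma exists_mem_neighborSet_inter_subsingleton {H : SimpleGraph V} (hH : H.IsAcyclic) {S : Set V}
    (hS : S.Nonempty) : ∃ x ∈ S, (H.neighborSet x ∩ S).Subsingleton := by
  have := hS.to_subtype
  obtain ⟨x, z, p, hp, hmax⟩ :=
    SimpleGraph.Walk.exists_isPath_forall_isPath_length_le_length (H.induce S)
  have hsnd (y : S) (hy : (H.induce S).Adj x y) : y = p.snd := by
    refine (hH.induce S).eq_snd_of_adj_start hp hy ?_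
    by_contra hyp
    have hlen := hmax y z (.cons hy.symm p) (hp.cons hyp)
    rw [SimpleGraph.Walk.length_cons] at hlen
    lia
  refine ⟨x, x.2, fun y hy z hz => ?_⟩
  exact congrArg Subtype.val ((hsnd ⟨y, hy.2⟩ hy.1).trans (hsnd ⟨z, hz.2⟩ hz.1).symm)

lemma exists_subset_sdiff_ncard_odd {N S : Set V} (hS : (N ∩ S).Subsingleton) :
    ∃ M ⊆ N \ S, (M.ncard ≠ 0 → Odd M.ncard) ∧ ((N \ M).ncard ≠ 0 → Odd (N \ M).ncard) := by
  rcases Nat.even_or_odd N.ncard with heven | hodd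
  · by_cases hN : N.ncard = 0
    · exact ⟨∅, Set.empty_subset _, by simp, by simp [hN]⟩
    have hone : 1 < N.ncard := by
      obtain ⟨m, hm⟩ := heven
      lia
    obtain ⟨z, hzN, hzS⟩ : (N \ S).Nonempty := by
      by_contra hempty
      rw [Set.not_nonempty_iff_eq_empty, Set.sdiff_eq_empty] at hempty
      rw [Set.inter_eq_left.2 hempty] at hS
      exact hone.not_ge (Set.ncard_le_one_iff_subsingleton.2 hS)
    refine ⟨{z}, by simp [hzN, hzS], by simp, fun _ => ?_⟩
    rw [Set.ncard_sdiff_singleton_of_mem hzN]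
    exact Nat.Even.sub_odd (by lia) heven odd_one
  · exact ⟨∅, Set.empty_subset _, by simp, by simpa using fun _ => hodd⟩

lemma exists_subset_inter_eq_ncard_odd {N A S : Set V} (hA : A ⊆ N) (hS : (N ∩ S).Subsingleton) :
    ∃ M ⊆ N, M ∩ S = A ∩ S ∧ (M.ncard ≠ 0 → Odd M.ncard) ∧
      ((N \ M).ncard ≠ 0 → Odd (N \ M).ncard) := by
  obtain ⟨M, hM, hodd, hodd'⟩ := exists_subset_sdiff_ncard_odd hS
  have hMN : M ⊆ N := hM.trans Set.sdiff_subset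
  rcases (A ∩ S).eq_empty_or_nonempty with hempty | ⟨z, hzA, hzS⟩
  · exact ⟨M, hMN, by grind, hodd, hodd'⟩
  · have hAS : N ∩ S = A ∩ S :=
      Set.Subset.antisymm (fun y hy => hS hy ⟨hA hzA, hzS⟩ ▸ ⟨hzA, hzS⟩) (by grind)
    refine ⟨N \ M, Set.sdiff_subset, by grind, hodd', ?_⟩
    rwa [Set.sdiff_sdiff_cancel_left hMN]

lemma exists_le_splitsOddlyAt_insert {K L : SimpleGraph V} (hLK : L ≤ K) {S : Set V} {x : V}
    (hxS : x ∉ S) (hx : (K.neighborSet x ∩ S).Subsingleton)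
    (hL : ∀ y ∈ S, SplitsOddlyAt K L y) :
    ∃ L' ≤ K, ∀ y ∈ insert x S, SplitsOddlyAt K L' y := by
  obtain ⟨M, hMK, hMS, hM, hM'⟩ :=
    exists_subset_inter_eq_ncard_odd (SimpleGraph.neighborSet_mono hLK x) hx
  set T := L.neighborSet x ∆ M with hT
  have hTK : T ⊆ K.neighborSet x :=
    symmDiff_le (le_sup_of_le_right (SimpleGraph.neighborSet_mono hLK x))
      (le_sup_of_le_right hMK)
  have hTS (y : V) (hy : y ∈ S) : y ∉ T := by
    have := Set.ext_iff.1 hMS y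
    grind
  have hxT : x ∉ T := fun h => (hTK h).ne rfl
  have hcenter : (L ∆ starTo x T).neighborSet x = M := by
    rw [neighborSet_symmDiff, neighborSet_starTo_center hxT, hT, symmDiff_symmDiff_cancel_left]
  refine ⟨L ∆ starTo x T, ?_, ?_⟩
  · exact symmDiff_le (le_sup_of_le_right hLK) (le_sup_of_le_right (starTo_le hTK))
  rintro y (rfl | hy)
  · refine ⟨?_, ?_⟩
    · rwa [OddAt, hcenter]
    · rwa [OddAt, SimpleGraph.neighborSet_sdiff, hcenter]
  · have hsame : (L ∆ starTo x T).neighborSet y = L.neighborSet y := by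
      have hyx : y ≠ x := fun h => hxS (h ▸ hy)
      rw [neighborSet_symmDiff, neighborSet_starTo_of_notMem hyx (hTS y hy)]
      exact symmDiff_bot _
    refine ⟨(oddAt_congr hsame).2 (hL y hy).1, (oddAt_congr ?_).2 (hL y hy).2⟩
    rw [SimpleGraph.neighborSet_sdiff, SimpleGraph.neighborSet_sdiff, hsame]

/-- Each vertex is treated when at most one of its neighbors in `S` has been treated before, so all
but one of its edges are still free. -/
lemma exists_le_splitsOddlyAt_of_isAcyclic (K : SimpleGraph V) (S : Set V)
    (hS : (restrictTo K S).IsAcyclic) : ∃ L ≤ K, ∀ x ∈ S, SplitsOddlyAt K L x := by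
  induction S using WellFoundedLT.induction with
  | ind S ih =>
    rcases S.eq_empty_or_nonempty with rfl | hne
    · exact ⟨⊥, bot_le, by simp⟩
    obtain ⟨x, hxS, hx⟩ := exists_mem_neighborSet_inter_subsingleton hS hne
    rw [neighborSet_restrictTo_of_mem hxS] at hx
    obtain ⟨L, hLK, hL⟩ := ih (S \ {x}) (Set.sdiff_singleton_ssubset.2 hxS)
      (hS.anti (restrictTo_mono Set.sdiff_subset))
    rw [← Set.insert_sdiff_self_of_mem hxS]
    exact exists_le_splitsOddlyAt_insert hLK (by simp) (hx.anti (by grind)) hL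

/-- Interchanging the two classes on `K₂` flips the parity at `u` of the glued class. -/
lemma exists_le_splitsOddlyAt_sup {K₁ K₂ L₁ L₂ : SimpleGraph V} {u : V}
    (hK : ∀ x ≠ u, K₁.neighborSet x = ∅ ∨ K₂.neighborSet x = ∅)
    (hK₁ : degreeParity K₁ u = 1) (hK₂ : degreeParity K₂ u = 1) (hLK₁ : L₁ ≤ K₁) (hLK₂ : L₂ ≤ K₂)
    (hL₁ : ∀ x ≠ u, SplitsOddlyAt K₁ L₁ x) (hL₂ : ∀ x ≠ u, SplitsOddlyAt K₂ L₂ x) :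
    ∃ L ≤ K₁ ⊔ K₂, ∀ x, SplitsOddlyAt (K₁ ⊔ K₂) L x := by
  have hdisj := disjoint_of_neighborSet_eq_empty hK
  wlog hpar : degreeParity L₁ u + degreeParity L₂ u = 1 generalizing L₂
  · refine this sdiff_le (fun x hx => (hL₂ x hx).sdiff hLK₂) ?_
    rw [degreeParity_sdiff hLK₂, hK₂]
    revert hpar
    generalize degreeParity L₁ u = a, degreeParity L₂ u = b
    revert a b
    decide
  have hLK : L₁ ⊔ L₂ ≤ K₁ ⊔ K₂ := sup_le_sup hLK₁ hLK₂
  refine ⟨L₁ ⊔ L₂, hLK, fun x => ?_⟩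
  by_cases hxu : x = u
  · subst hxu
    have hL : degreeParity (L₁ ⊔ L₂) x = 1 := by
      rw [degreeParity_sup (hdisj.mono hLK₁ hLK₂), hpar]
    refine ⟨oddAt_of_degreeParity_eq_one hL, oddAt_of_degreeParity_eq_one ?_⟩
    rw [degreeParity_sdiff hLK, hL, degreeParity_sup hdisj, hK₁, hK₂]
    decide
  · have hsub₁ := SimpleGraph.neighborSet_mono hLK₁ x
    have hsub₂ := SimpleGraph.neighborSet_mono hLK₂ x
    rcases hK x hxu with hempty | hempty
    · have hL₁x : L₁.neighborSet x = ∅ := Set.subset_eq_empty hsub₁ hempty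
      refine ⟨(oddAt_congr ?_).2 (hL₂ x hxu).1, (oddAt_congr ?_).2 (hL₂ x hxu).2⟩ <;>
        simp [SimpleGraph.neighborSet_sup, SimpleGraph.neighborSet_sdiff, hL₁x, hempty]
    · have hL₂x : L₂.neighborSet x = ∅ := Set.subset_eq_empty hsub₂ hempty
      refine ⟨(oddAt_congr ?_).2 (hL₁ x hxu).1, (oddAt_congr ?_).2 (hL₁ x hxu).2⟩ <;>
        simp [SimpleGraph.neighborSet_sup, SimpleGraph.neighborSet_sdiff, hL₂x, hempty]

end Splitting

section OuterPart

variable {V : Type*} {G F : SimpleGraph V} {B : Set V} {u : V}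

/-- The edges of `G` avoiding `B` together with the edges joining `u` to `B`. Up to a forest inside
`B`, these are the edges that receive the last two colors. -/
def outerPart (G : SimpleGraph V) (B : Set V) (u : V) : SimpleGraph V :=
  starTo u (G.neighborSet u ∩ B) ⊔ restrictTo G Bᶜ

lemma outerPart_le (G : SimpleGraph V) (B : Set V) (u : V) : outerPart G B u ≤ G :=
  sup_le (starTo_le Set.inter_subset_left) (restrictTo_le _ _)

lemma disjoint_outerPart (hu : u ∉ B) (hF : F ≤ restrictTo G B) :
    Disjoint F (outerPart G B u) := by
  refine SimpleGraph.disjoint_left.2 fun a b hab => ?_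
  obtain ⟨-, ha, hb⟩ := hF hab
  rw [outerPart, SimpleGraph.sup_adj, not_or, starTo_adj]
  exact ⟨by grind, fun hab' => hab'.2.1 ha⟩

lemma neighborSet_sdiff_outerPart_center (hu : u ∉ B) :
    (G \ (F ⊔ outerPart G B u)).neighborSet u = ∅ := by
  rw [SimpleGraph.neighborSet_sdiff, SimpleGraph.neighborSet_sup, outerPart,
    SimpleGraph.neighborSet_sup, neighborSet_starTo_center fun h => hu h.2,
    neighborSet_restrictTo_of_mem hu, Set.inter_union_compl, Set.sdiff_eq_empty]
  exact Set.subset_union_right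

lemma neighborSet_sdiff_outerPart_of_notMem (hF : F ≤ restrictTo G B) {x : V} (hxu : x ≠ u)
    (hx : x ∉ B) : (G \ (F ⊔ outerPart G B u)).neighborSet x = G.neighborSet x ∩ B := by
  rw [SimpleGraph.neighborSet_sdiff, SimpleGraph.neighborSet_sup, outerPart,
    SimpleGraph.neighborSet_sup, neighborSet_eq_empty_of_le_restrictTo hF hx,
    neighborSet_starTo_of_notMem hxu fun h => hx h.2, neighborSet_restrictTo_of_mem hx,
    Set.empty_union, Set.empty_union]
  grind

end OuterPart

section OddFrame

variable {V : Type*}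

/-- A vertex set `B` with a distinguished vertex `u` outside it, giving the decomposition of `G`
from which the odd coloring is built: `G[B]` is connected, the graph induced on the complement of
`B` is a forest in which `u` has odd degree, and every vertex outside `B` has an odd number of
neighbors in `B`. -/
structure IsOddFrame (G : SimpleGraph V) (B : Set V) (u : V) : Prop where
  notMem : u ∉ B
  connectedOn : ConnectedOn G B
  isAcyclic_compl : (restrictTo G Bᶜ).IsAcyclic
  degreeParity_compl : degreeParity (restrictTo G Bᶜ) u = 1
  odd_inter : ∀ x ∉ B, Odd (G.neighborSet x ∩ B).ncard

namespace IsOddFrame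

variable [Finite V] {G F : SimpleGraph V} {B : Set V} {u : V}

lemma exists_isAcyclic_oddAt_sdiff (h : IsOddFrame G B u) (hV : Odd (Nat.card V)) :
    ∃ F ≤ restrictTo G B, F.IsAcyclic ∧ ∀ x, OddAt (G \ (F ⊔ outerPart G B u)) x := by
  have := Fintype.ofFinite V
  rw [Nat.card_eq_fintype_card] at hV
  obtain ⟨r, -, hr⟩ := Set.nonempty_of_ncard_ne_zero (h.odd_inter u h.notMem).pos.ne'
  obtain ⟨F, hFB, hFa, hF⟩ := exists_isAcyclic_le_degreeParity_eq (G := restrictTo G B) r fun x =>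
    degreeParity G x + degreeParity (outerPart G B u) x + 1
  refine ⟨F, hFB, hFa, fun x => ?_⟩
  set H := G \ (F ⊔ outerPart G B u)
  have hHu : H.neighborSet u = ∅ := neighborSet_sdiff_outerPart_center h.notMem
  have hparity (y : V) (hyu : y ≠ u) (hyr : y ≠ r) : degreeParity H y = 1 := by
    by_cases hy : y ∈ B
    · have hle : F ⊔ outerPart G B u ≤ G :=
        sup_le (hFB.trans (restrictTo_le _ _)) (outerPart_le _ _ _)
      rw [degreeParity_sdiff hle, degreeParity_sup (disjoint_outerPart h.notMem hFB),
        hF y hyr (h.connectedOn r hr y hy)]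
      generalize degreeParity G y = g, degreeParity (outerPart G B u) y = o
      revert g o
      decide
    · rw [degreeParity_eq_one_iff, neighborSet_sdiff_outerPart_of_notMem hFB hyu hy]
      exact h.odd_inter y hy
  by_cases hxu : x = u
  · simp [OddAt, hxu, hHu]
  by_cases hxr : x = r
  · have hur : u ≠ r := fun hur => h.notMem (hur ▸ hr)
    exact hxr ▸ oddAt_of_degreeParity_eq_one
      (degreeParity_eq_one_of_odd_card hV hur (by simp [degreeParity, hHu]) hparity)
  · exact oddAt_of_degreeParity_eq_one (hparity x hxu hxr)

lemma exists_splitsOddlyAt (h : IsOddFrame G B u) (hF : F ≤ restrictTo G B) (hFa : F.IsAcyclic) :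
    ∃ L ≤ F ⊔ outerPart G B u, ∀ x, SplitsOddlyAt (F ⊔ outerPart G B u) L x := by
  rw [outerPart, ← sup_assoc]
  set spokes := starTo u (G.neighborSet u ∩ B)
  have hempty (x : V) (hxu : x ≠ u) (hx : x ∉ B) : (F ⊔ spokes).neighborSet x = ∅ := by
    rw [SimpleGraph.neighborSet_sup, neighborSet_eq_empty_of_le_restrictTo hF hx,
      neighborSet_starTo_of_notMem hxu fun hx' => hx hx'.2, Set.union_empty]
  have hacyclic : (restrictTo (F ⊔ spokes) B).IsAcyclic := by
    refine hFa.anti fun a b hab => hab.1.resolve_right fun hstar => ?_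
    rcases (starTo_adj.1 hstar).2 with ⟨rfl, -⟩ | ⟨rfl, -⟩
    · exact h.notMem hab.2.1
    · exact h.notMem hab.2.2
  have hcenter : degreeParity (F ⊔ spokes) u = 1 := by
    rw [degreeParity_eq_one_iff, SimpleGraph.neighborSet_sup,
      neighborSet_eq_empty_of_le_restrictTo hF h.notMem, Set.empty_union,
      neighborSet_starTo_center fun hu => h.notMem hu.2]
    exact h.odd_inter u h.notMem
  obtain ⟨L₁, hLK₁, hL₁⟩ := exists_le_splitsOddlyAt_of_isAcyclic (F ⊔ spokes) B hacyclic
  obtain ⟨L₂, hLK₂, hL₂⟩ := exists_le_splitsOddlyAt_of_isAcyclic (restrictTo G Bᶜ) Set.univ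
    (h.isAcyclic_compl.anti (restrictTo_le _ _))
  refine exists_le_splitsOddlyAt_sup (fun x hxu => ?_) hcenter h.degreeParity_compl hLK₁ hLK₂
    (fun x hxu => ?_) fun x _ => hL₂ x (Set.mem_univ x)
  · by_cases hx : x ∈ B
    · exact .inr (neighborSet_restrictTo_of_notMem (not_not.2 hx))
    · exact .inl (hempty x hxu hx)
  · by_cases hx : x ∈ B
    · exact hL₁ x hx
    · have hL₁x : L₁.neighborSet x = ∅ :=
        Set.subset_eq_empty (SimpleGraph.neighborSet_mono hLK₁ x) (hempty x hxu hx)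
      simp [SplitsOddlyAt, OddAt, SimpleGraph.neighborSet_sdiff, hL₁x, hempty x hxu hx]

lemma oddEdgeColorable_three (h : IsOddFrame G B u) (hV : Odd (Nat.card V)) :
    OddEdgeColorable G 3 := by
  obtain ⟨F, hFB, hFa, hodd⟩ := h.exists_isAcyclic_oddAt_sdiff hV
  obtain ⟨L, hLK, hL⟩ := h.exists_splitsOddlyAt hFB hFa
  have hle : F ⊔ outerPart G B u ≤ G :=
    sup_le (hFB.trans (restrictTo_le _ _)) (outerPart_le _ _ _)
  refine oddEdgeColorable_succ sdiff_le hodd ?_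
  rw [sdiff_sdiff_eq_self hle]
  exact oddEdgeColorable_succ hLK (fun x => (hL x).1) (oddEdgeColorable_one fun x => (hL x).2)

end IsOddFrame

end OddFrame

section OuterBoundary

variable {V : Type*} {G : SimpleGraph V} {C S Y : Set V} {a b : V}

/-- The open neighborhood of `C`: the vertices outside `C` with a neighbor in `C`. -/
def outerBoundary (G : SimpleGraph V) (C : Set V) : Set V :=
  {y | y ∉ C ∧ ∃ x ∈ C, G.Adj x y}

lemma IsKConnected.reachable_restrictTo_compl [Fintype V] {k : ℕ} (h : IsKConnected G k)
    (hS : S.ncard < k) (ha : a ∉ S) (hb : b ∉ S) : (restrictTo G Sᶜ).Reachable a b :=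
  ((h.2 S hS).preconnected ⟨a, ha⟩ ⟨b, hb⟩).map
    (⟨Subtype.val, fun {x y} hxy => ⟨hxy, x.2, y.2⟩⟩ : G.induce Sᶜ →g restrictTo G Sᶜ)

lemma IsKConnected.le_ncard_outerBoundary [Fintype V] {k : ℕ} (h : IsKConnected G k)
    (ha : a ∈ C) (hb : b ∉ C) (hb' : b ∉ outerBoundary G C) : k ≤ (outerBoundary G C).ncard := by
  by_contra! hlt
  obtain ⟨p⟩ := h.reachable_restrictTo_compl hlt (fun ha' => ha'.1 ha) hb'
  obtain ⟨d, -, hfst, hsnd⟩ := p.exists_boundary_dart C ha hb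
  exact d.adj.2.2 ⟨hsnd, d.fst, hfst, d.adj.1⟩

lemma ConnectedOn.reachable_of_mem_outerBoundary (hC : ConnectedOn G C)
    (ha : a ∈ outerBoundary G C) (hb : b ∈ outerBoundary G C) (hCS : C ⊆ S) (haS : a ∈ S)
    (hbS : b ∈ S) : (restrictTo G S).Reachable a b := by
  obtain ⟨-, c, hc, hca⟩ := ha
  obtain ⟨-, d, hd, hdb⟩ := hb
  have hac : (restrictTo G S).Reachable a c := SimpleGraph.Adj.reachable ⟨hca.symm, haS, hCS hc⟩
  have hdb : (restrictTo G S).Reachable d b := SimpleGraph.Adj.reachable ⟨hdb, hCS hd, hbS⟩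
  exact (hac.trans ((hC c hc d hd).mono (restrictTo_mono hCS))).trans hdb

lemma exists_forall_ne_reachable_restrictTo_sdiff [Finite V] (p : G.Walk a b)
    (hpS : ∀ x ∈ p.support, x ∈ S) (hpY : ∃ y ∈ Y, y ∈ p.support) :
    ∃ z ∈ Y, z ∈ S ∧ ∀ y ∈ Y, y ≠ z → (restrictTo G (S \ {y})).Reachable a z := by
  classical
  obtain ⟨z, hzY, hzp, hfirst⟩ :=
    p.exists_mem_support_forall_mem_support_imp_eq (Set.toFinite Y).toFinset
      (by simpa [Finset.Nonempty] using hpY)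
  refine ⟨z, by simpa using hzY, hpS z hzp, fun y hy hyz => ?_⟩
  refine reachable_restrictTo_of_walk (p.takeUntil z hzp) fun x hx => ⟨?_, ?_⟩
  · exact hpS x (p.support_takeUntil_subset_support hzp hx)
  · rintro rfl
    exact hyz (hfirst x (by simpa using hy) hx)

/-- The detour enters `C` at the first vertex of its outer boundary on the walk and leaves it at the
last one, so that it misses any third vertex of the boundary. -/
lemma ConnectedOn.exists_reachable_restrictTo_sdiff [Finite V] (hC : ConnectedOn G C)
    (hCS : C ⊆ S) (hcard : 3 ≤ (outerBoundary G C).ncard) (p : G.Walk a b)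
    (hpS : ∀ x ∈ p.support, x ∈ S) :
    ∃ y ∈ outerBoundary G C, (restrictTo G (S \ {y})).Reachable a b := by
  by_cases hmiss : ∃ y ∈ outerBoundary G C, y ∉ p.support
  · obtain ⟨y, hy, hyp⟩ := hmiss
    exact ⟨y, hy, reachable_restrictTo_of_walk p fun x hx => ⟨hpS x hx, fun h => hyp (h ▸ hx)⟩⟩
  push Not at hmiss
  obtain ⟨c, hc⟩ := Set.nonempty_of_ncard_ne_zero (s := outerBoundary G C) (by lia)
  obtain ⟨ya, hya, hyaS, ha⟩ :=
    exists_forall_ne_reachable_restrictTo_sdiff p hpS ⟨c, hc, hmiss c hc⟩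
  obtain ⟨yb, hyb, hybS, hb⟩ :=
    exists_forall_ne_reachable_restrictTo_sdiff (S := S) (Y := outerBoundary G C) p.reverse
      (by simpa using hpS) ⟨c, hc, by simpa using hmiss c hc⟩
  obtain ⟨y, hy, hyab⟩ := Set.exists_mem_notMem_of_ncard_lt_ncard
    (s := {ya, yb}) (t := outerBoundary G C) ((Set.ncard_insert_le _ _).trans_lt (by simpa))
  simp only [Set.mem_insert_iff, Set.mem_singleton_iff, not_or] at hyab
  have hmid : (restrictTo G (S \ {y})).Reachable ya yb :=
    hC.reachable_of_mem_outerBoundary hya hyb (fun x hx => ⟨hCS hx, fun h => hy.1 (h ▸ hx)⟩)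
      ⟨hyaS, fun h => hyab.1 h.symm⟩ ⟨hybS, fun h => hyab.2 h.symm⟩
  exact ⟨y, hy, ((ha y hy hyab.1).trans hmid).trans (hb y hy hyab.2).symm⟩

end OuterBoundary

section Geodesic

variable {V : Type*} {G : SimpleGraph V} {a b : V} {p : G.Walk a b}

lemma le_succ_of_adj_getVert (hp : p.length = G.dist a b) {i j : ℕ} (hj : j ≤ p.length)
    (hij : G.Adj (p.getVert i) (p.getVert j)) : j ≤ i + 1 := by
  have hshortcut := SimpleGraph.dist_le ((p.take i).append (.cons hij (p.drop j)))
  rw [SimpleGraph.Walk.length_append, SimpleGraph.Walk.length_cons,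
    SimpleGraph.Walk.take_length, SimpleGraph.Walk.drop_length] at hshortcut
  lia

lemma mk_mem_edges_of_length_eq_dist (hp : p.length = G.dist a b) {x y : V} (hx : x ∈ p.support)
    (hy : y ∈ p.support) (hxy : G.Adj x y) : s(x, y) ∈ p.edges := by
  obtain ⟨i, rfl, hi⟩ := SimpleGraph.Walk.mem_support_iff_exists_getVert.1 hx
  obtain ⟨j, rfl, hj⟩ := SimpleGraph.Walk.mem_support_iff_exists_getVert.1 hy
  have hji := le_succ_of_adj_getVert hp hj hxy
  have hij := le_succ_of_adj_getVert hp hi hxy.symm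
  have hne : i ≠ j := fun h => hxy.ne (congrArg p.getVert h)
  rw [SimpleGraph.Walk.mk_mem_edges_iff_exists]
  obtain rfl | rfl : j = i + 1 ∨ i = j + 1 := by lia
  · exact ⟨i, by lia, rfl⟩
  · exact ⟨j, by lia, Sym2.eq_swap⟩

lemma spanningCoe_toSubgraph_of_length_eq_dist (hp : p.length = G.dist a b)
    (hsupport : ∀ x y, G.Adj x y → x ∈ p.support) : p.toSubgraph.spanningCoe = G := by
  refine le_antisymm p.toSubgraph.spanningCoe_le fun x y hxy => ?_
  rw [SimpleGraph.Subgraph.spanningCoe_adj, SimpleGraph.Walk.adj_toSubgraph_iff_mem_edges]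
  exact mk_mem_edges_of_length_eq_dist hp (hsupport x y hxy) (hsupport y x hxy.symm) hxy

end Geodesic

section LeavesLinked

variable {V : Type*} {G : SimpleGraph V} {E B : Set V}

/-- Two distinct vertices of `E` lie in the same component of `G - B`. -/
def LeavesLinked (G : SimpleGraph V) (E B : Set V) : Prop :=
  ∃ a ∈ E, ∃ b ∈ E, a ≠ b ∧ (restrictTo G Bᶜ).Reachable a b

lemma LeavesLinked.exists_walk (h : LeavesLinked G E B) :
    ∃ a ∈ E, ∃ b ∈ E, a ≠ b ∧ ∃ p : G.Walk a b, ∀ x ∈ p.support, x ∉ B := by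
  obtain ⟨a, ha, b, hb, hab, ⟨p⟩⟩ := h
  refine ⟨a, ha, b, hb, hab, p.mapLe (restrictTo_le G Bᶜ), fun x hx => ?_⟩
  rw [SimpleGraph.Walk.support_mapLe_eq_support] at hx
  exact mem_of_mem_support_restrictTo p hab hx

/-- A maximal connected vertex set whose deletion leaves two vertices of `E` linked. -/
abbrev IsMaximalLeavingLinked (G : SimpleGraph V) (E : Set V) : Set V → Prop :=
  Maximal fun B => ConnectedOn G B ∧ LeavesLinked G E B

namespace IsMaximalLeavingLinked

lemma not_leavesLinked_insert (h : IsMaximalLeavingLinked G E B) {y : V} (hy : y ∉ B)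
    (hyB : (G.neighborSet y ∩ B).Nonempty) : ¬ LeavesLinked G E (insert y B) := fun hlinked =>
  hy (h.le_of_ge ⟨h.prop.1.insert_of_neighbor hyB, hlinked⟩ (Set.subset_insert y B)
    (Set.mem_insert y B))

lemma nonempty_neighborSet_inter [Fintype V] (h : IsMaximalLeavingLinked G E B)
    (hG : IsKConnected G 3) (hB : B.Nonempty) {x : V} (hx : x ∉ B) :
    (G.neighborSet x ∩ B).Nonempty := by
  by_contra hxB
  set R := {w | w ∉ B ∧ ¬ (G.neighborSet w ∩ B).Nonempty}
  set C := {w | (restrictTo G R).Reachable x w}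
  have hCR : C ⊆ R := by
    rintro w ⟨p⟩
    by_cases hxw : x = w
    · exact hxw ▸ ⟨hx, hxB⟩
    · exact mem_of_mem_support_restrictTo p hxw p.end_mem_support
  have hboundary (y : V) (hy : y ∈ outerBoundary G C) :
      y ∉ B ∧ (G.neighborSet y ∩ B).Nonempty := by
    obtain ⟨hyC, w, hwC, hwy⟩ := hy
    have hyB : y ∉ B := fun hyB => (hCR hwC).2 ⟨y, hwy, hyB⟩
    refine ⟨hyB, not_not.1 fun hyN => hyC ?_⟩
    exact SimpleGraph.Reachable.trans hwC
      (SimpleGraph.Adj.reachable ⟨hwy, hCR hwC, hyB, hyN⟩)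
  obtain ⟨b, hb⟩ := hB
  have hcard : 3 ≤ (outerBoundary G C).ncard :=
    hG.le_ncard_outerBoundary (SimpleGraph.Reachable.refl x) (fun hbC => (hCR hbC).1 hb)
      fun hbC => (hboundary b hbC).1 hb
  obtain ⟨a, ha, b, hb, hab, p, hp⟩ := h.prop.2.exists_walk
  have hC : ConnectedOn G C := connectedOn_setOf_reachable_restrictTo G R x
  obtain ⟨y, hy, hreach⟩ :=
    hC.exists_reachable_restrictTo_sdiff (S := Bᶜ) (fun w hw => (hCR hw).1) hcard p hp
  obtain ⟨hyB, hyN⟩ := hboundary y hy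
  refine h.not_leavesLinked_insert hyB hyN ⟨a, ha, b, hb, hab, ?_⟩
  rwa [Set.insert_eq, Set.union_comm, Set.compl_union, ← Set.sdiff_eq]

end IsMaximalLeavingLinked

lemma exists_isMaximalLeavingLinked [Fintype V] {k : ℕ} (hk : 2 ≤ k) (hG : IsKConnected G k)
    {u v : V} (hu : u ∈ E) (hv : v ∈ E) (huv : u ≠ v) :
    ∃ B, B.Nonempty ∧ IsMaximalLeavingLinked G E B := by
  obtain ⟨z, -, hz⟩ := Set.exists_mem_notMem_of_ncard_lt_ncard (s := {u, v}) (t := Set.univ) (by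
    rw [Set.ncard_pair huv, Set.ncard_univ, Nat.card_eq_fintype_card]
    exact hk.trans_lt hG.1)
  simp only [Set.mem_insert_iff, Set.mem_singleton_iff, not_or] at hz
  have hconn : ConnectedOn G {z} := by
    rintro _ rfl _ rfl
    rfl
  have hlinked : LeavesLinked G E {z} := ⟨u, hu, v, hv, huv,
    hG.reachable_restrictTo_compl (by simpa) (fun h => hz.1 h.symm) fun h => hz.2 h.symm⟩
  obtain ⟨B, hzB, hB⟩ := (Set.toFinite {B | ConnectedOn G B ∧ LeavesLinked G E B}).exists_le_maximal
    ⟨hconn, hlinked⟩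
  exact ⟨B, ⟨z, hzB rfl⟩, hB⟩

lemma mem_support_of_not_leavesLinked_insert {y a b : V} (hy : ¬ LeavesLinked G E (insert y B))
    (ha : a ∈ E) (hb : b ∈ E) (hab : a ≠ b) (p : (restrictTo G Bᶜ).Walk a b) : y ∈ p.support := by
  by_contra hyp
  refine hy ⟨a, ha, b, hb, hab,
    reachable_restrictTo_of_walk (p.mapLe (restrictTo_le G Bᶜ)) fun x hx => ?_⟩
  rw [SimpleGraph.Walk.support_mapLe_eq_support] at hx
  rintro (rfl | hxB)
  · exact hyp hx
  · exact mem_of_mem_support_restrictTo p hab hx hxB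

lemma LeavesLinked.exists_isPath_toSubgraph_eq (h : LeavesLinked G E B)
    (hess : ∀ y ∉ B, ¬ LeavesLinked G E (insert y B)) :
    ∃ a ∈ E, ∃ b ∈ E, a ≠ b ∧ a ∉ B ∧ (∀ x ∈ E, x ∉ B → x = a ∨ x = b) ∧
      ∃ p : (restrictTo G Bᶜ).Walk a b, p.IsPath ∧
        p.toSubgraph.spanningCoe = restrictTo G Bᶜ := by
  classical
  obtain ⟨a, ha, b, hb, hab, hreach⟩ := h
  obtain ⟨p, hp, hlen⟩ := hreach.exists_path_of_dist
  have hsupport (x : V) (hx : x ∉ B) : x ∈ p.support :=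
    mem_support_of_not_leavesLinked_insert (hess x hx) ha hb hab p
  refine ⟨a, ha, b, hb, hab, mem_of_mem_support_restrictTo p hab p.start_mem_support, ?_, p, hp,
    spanningCoe_toSubgraph_of_length_eq_dist hlen fun x y hxy => hsupport x hxy.2.1⟩
  intro x hxE hxB
  by_contra! hx
  refine SimpleGraph.Walk.endpoint_notMem_support_takeUntil hp (hsupport x hxB) hx.2.symm ?_
  have hbB : b ∉ B := mem_of_mem_support_restrictTo p hab p.end_mem_support
  exact mem_support_of_not_leavesLinked_insert (hess b hbB) ha hxE hx.1.symm _

lemma odd_ncard_neighborSet_inter [Finite V] {x : V} (hx : x ∉ B)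
    (h : degreeParity G x + degreeParity (restrictTo G Bᶜ) x = 1) :
    Odd (G.neighborSet x ∩ B).ncard := by
  have hsdiff : (G \ restrictTo G Bᶜ).neighborSet x = G.neighborSet x ∩ B := by
    rw [SimpleGraph.neighborSet_sdiff, neighborSet_restrictTo_of_mem hx]
    grind
  rwa [← degreeParity_sdiff (restrictTo_le G Bᶜ), degreeParity_eq_one_iff, hsdiff] at h

lemma exists_isOddFrame [Fintype V] (hG : IsKConnected G 3) {u v : V} (huv : u ≠ v)
    (hu : Even (G.neighborSet u).ncard) (hv : Even (G.neighborSet v).ncard) :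
    ∃ B a, IsOddFrame G B a := by
  classical
  obtain ⟨B, hne, hB⟩ :=
    exists_isMaximalLeavingLinked (E := {x | Even (G.neighborSet x).ncard}) (by simp) hG hu hv huv
  obtain ⟨a, ha, b, hb, hab, haB, hE, p, hp, hpB⟩ := hB.prop.2.exists_isPath_toSubgraph_eq
    fun y hy => hB.not_leavesLinked_insert hy (hB.nonempty_neighborSet_inter hG hne hy)
  have hparity (x : V) : degreeParity (restrictTo G Bᶜ) x
      = (Pi.single a 1 : V → ZMod 2) x + (Pi.single b 1 : V → ZMod 2) x := by
    rw [← degreeParity_toSubgraph_of_isTrail hp.isTrail, hpB]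
  refine ⟨B, a, haB, hB.prop.1, hpB ▸ isAcyclic_toSubgraph_of_isPath hp, by simp [hparity, hab],
    fun x hx => odd_ncard_neighborSet_inter hx ?_⟩
  by_cases hxE : Even (G.neighborSet x).ncard
  · rw [degreeParity_eq_zero_iff.2 hxE, hparity]
    rcases hE x hxE hx with rfl | rfl
    · simp [hab]
    · simp [hab.symm]
  · have hxa : x ≠ a := fun h => hxE (h ▸ ha)
    have hxb : x ≠ b := fun h => hxE (h ▸ hb)
    rw [degreeParity_eq_one_iff.2 (Nat.not_even_iff_odd.1 hxE), hparity]
    simp [hxa, hxb]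

end LeavesLinked

/-- A 3-connected graph of odd order with at least two vertices of even degree
is odd 3-edge-colorable. -/
theorem stmt7 {V : Type*} [Fintype V] (G : SimpleGraph V)
    (hconn : IsKConnected G 3) (hodd : Odd (Fintype.card V))
    (u v : V) (huv : u ≠ v)
    (hu : Even (G.neighborSet u).ncard) (hv : Even (G.neighborSet v).ncard) :
    OddEdgeColorable G 3 := by
  obtain ⟨B, a, hframe⟩ := exists_isOddFrame hconn huv hu hv
  exact hframe.oddEdgeColorable_three (by rwa [Nat.card_eq_fintype_card])
end

section
/- Let G be a connected simple graph of odd order with exactly one vertex w of even degree. If w is adjacent to all other vertices of G, G − w is connected, and G is not isomorphic to the wheel W_4, then G is odd 3-edge-colorable. -/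
/-- The wheel `W₄`: a 4-cycle `0-1-2-3` together with the center `4` adjacent to all
four cycle vertices. -/
def wheelFour : SimpleGraph (Fin 5) :=
  SimpleGraph.fromEdgeSet
    {s(0, 1), s(1, 2), s(2, 3), s(3, 0), s(4, 0), s(4, 1), s(4, 2), s(4, 3)}

/-!
A spanning odd subgraph of `H := G - w` on a vertex set `Y` can serve as one colour class. If
`H - Y` has a component `P` of odd order, then the edges meeting `P`, together with suitable edges
from `w` to `Y`, form a second odd class by the handshake lemma, and what remains of `G` is a third
one. By the existence of `T`-joins, `H - Y` has such a component unless it has a spanning odd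
subgraph itself.

So if `G` is not odd 3-edge-colorable, the sets `Y` carrying an odd spanning subgraph of `H[Y]` are
closed under complements, hence under differences. Removing edges from paths on four vertices and
from claws, one finds that the ends of such a path are adjacent, and that the neighbourhood of a
vertex of degree at least three is a clique. As `H` is connected and has even order and even
degrees, this leaves only the 4-cycle, and then `G` is the wheel `W₄`.
-/

open SimpleGraph
open scoped symmDiff

theorem symmDiff_le_of_le {α : Type*} [GeneralizedCoheytingAlgebra α] {a b c : α}
    (ha : a ≤ c) (hb : b ≤ c) : a ∆ b ≤ c :=
  symmDiff_le_sup.trans (sup_le ha hb)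

theorem odd_ncard_symmDiff {α : Type*} [Finite α] (s t : Set α) :
    Odd (s ∆ t).ncard ↔ ¬(Odd s.ncard ↔ Odd t.ncard) := by
  have hs := Set.ncard_inter_add_ncard_sdiff_eq_ncard s t
  have ht := Set.ncard_inter_add_ncard_sdiff_eq_ncard t s
  have hst : (s ∆ t).ncard = (s \ t).ncard + (t \ s).ncard :=
    Set.ncard_union_eq disjoint_sdiff_sdiff
  rw [Set.inter_comm] at ht
  grind

theorem even_ncard_symmDiff_singleton_inter {α : Type*} [Finite α] {s : Set α} {a b : α}
    (h : a ∈ s ↔ b ∈ s) : Even (({a} ∆ {b}) ∩ s).ncard := by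
  rw [Set.inter_symmDiff_distrib_right, ← Nat.not_odd_iff_even, odd_ncard_symmDiff]
  by_cases ha : a ∈ s
  · simp [ha, h.1 ha]
  · simp [ha, mt h.2 ha]

theorem mem_of_adj_closed_of_reachable {V : Type*} {H : SimpleGraph V} {S : Set V} {u v : V}
    (hS : ∀ ⦃x y⦄, x ∈ S → H.Adj x y → y ∈ S) (huv : H.Reachable u v) (hu : u ∈ S) : v ∈ S := by
  rw [reachable_iff_reflTransGen] at huv
  induction huv with
  | refl => exact hu
  | tail _ hxy hx => exact hS hx hxy

/-- The set of vertices of odd degree in `F`; a vertex of infinite degree has junk degree `0` and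
does not belong to it. It carries symmetric differences of graphs to symmetric differences. -/
def oddVerts {V : Type*} (F : SimpleGraph V) : Set V :=
  {v | Odd (F.neighborSet v).ncard}

section OddVerts

variable {V : Type*} {F F' H : SimpleGraph V}

theorem oddVerts_subset_support (F : SimpleGraph V) : oddVerts F ⊆ F.support := fun _ hv ↦
  Set.nonempty_of_ncard_ne_zero (Odd.pos hv).ne'

theorem support_symmDiff_subset (F F' : SimpleGraph V) :
    (F ∆ F').support ⊆ F.support ∪ F'.support := by
  rintro v ⟨u, ⟨hF, -⟩ | ⟨hF', -⟩⟩
  exacts [.inl ⟨u, hF⟩, .inr ⟨u, hF'⟩]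

theorem oddVerts_bot : oddVerts (⊥ : SimpleGraph V) = ∅ := by
  ext v
  simp [oddVerts]

theorem oddVerts_edge (u v : V) : oddVerts (edge u v) = {u} ∆ {v} := by
  obtain rfl | huv := eq_or_ne u v
  · rw [edge_self_eq_bot, oddVerts_bot, symmDiff_self, Set.bot_eq_empty]
  ext x
  have hu : (edge u v).neighborSet u = {v} := by
    ext
    grind [mem_neighborSet]
  have hv : (edge u v).neighborSet v = {u} := by
    ext
    grind [mem_neighborSet]
  by_cases hxu : x = u
  · simp [oddVerts, Set.mem_symmDiff, hxu, hu, huv]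
  by_cases hxv : x = v
  · simp [oddVerts, Set.mem_symmDiff, hxv, hv, huv.symm]
  have hx : (edge u v).neighborSet x = ∅ := by
    ext
    grind [mem_neighborSet]
  simp [oddVerts, Set.mem_symmDiff, hx, hxu, hxv]

theorem oddVerts_spanningCoe {s : Set V} (F : SimpleGraph s) :
    oddVerts F.spanningCoe = (↑) '' oddVerts F := by
  have hmem (x : s) : (x : V) ∈ oddVerts F.spanningCoe ↔ x ∈ oddVerts F := by
    have hnbr : F.spanningCoe.neighborSet x = (↑) '' F.neighborSet x :=
      F.neighborSet_map (.subtype _) x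
    simp only [oddVerts, Set.mem_ofPred_eq, hnbr,
      Set.ncard_image_of_injective _ Subtype.val_injective]
  ext v
  constructor
  · intro hv
    obtain ⟨x, -, rfl⟩ := F.support_spanningCoe ▸ oddVerts_subset_support _ hv
    exact ⟨x, (hmem x).1 hv, rfl⟩
  · rintro ⟨x, hx, rfl⟩
    exact (hmem x).2 hx

variable [Finite V]

theorem even_ncard_oddVerts (F : SimpleGraph V) : Even (oddVerts F).ncard := by
  classical
  have := Fintype.ofFinite V
  convert F.even_card_odd_degree_vertices
  rw [← Set.ncard_coe_finset]
  congr with v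
  simp [oddVerts, ← card_neighborSet_eq_degree, Set.ncard_eq_toFinset_card']

theorem oddVerts_symmDiff (F F' : SimpleGraph V) :
    oddVerts (F ∆ F') = oddVerts F ∆ oddVerts F' := by
  ext v
  have hv : (F ∆ F').neighborSet v = F.neighborSet v ∆ F'.neighborSet v := rfl
  simp only [oddVerts, Set.mem_symmDiff, Set.mem_ofPred_eq, hv, odd_ncard_symmDiff]
  tauto

theorem oddVerts_sup_of_disjoint (h : Disjoint F F') :
    oddVerts (F ⊔ F') = oddVerts F ∆ oddVerts F' := by
  rw [← h.symmDiff_eq_sup, oddVerts_symmDiff]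

theorem oddVerts_sdiff_of_le (h : F ≤ H) : oddVerts (H \ F) = oddVerts H ∆ oddVerts F := by
  rw [← symmDiff_of_ge h, oddVerts_symmDiff]

theorem exists_le_oddVerts_eq_of_reachable {u v : V} (h : H.Reachable u v) :
    ∃ F ≤ H, oddVerts F = {u} ∆ {v} := by
  rw [reachable_iff_reflTransGen] at h
  induction h with
  | refl => exact ⟨⊥, bot_le, by rw [oddVerts_bot, symmDiff_self, Set.bot_eq_empty]⟩
  | @tail x y _ hxy ih =>
    obtain ⟨F, hF, hodd⟩ := ih
    have hle : edge x y ≤ H := (edge_le_iff H).2 (.inr hxy)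
    refine ⟨F ∆ edge x y, symmDiff_le_of_le hF hle, ?_⟩
    rw [oddVerts_symmDiff, hodd, oddVerts_edge, symmDiff_assoc, symmDiff_symmDiff_cancel_left]

-- This is the existence of `T`-joins: pairs of vertices of `T` in the same component are joined
-- one after another, each time by toggling the edges of a walk.
theorem exists_le_oddVerts_eq (T : Set V)
    (hT : ∀ C : H.ConnectedComponent, Even (T ∩ C.supp).ncard) :
    ∃ F ≤ H, oddVerts F = T := by
  induction hn : T.ncard using Nat.strong_induction_on generalizing T with | _ n ih
  obtain rfl | ⟨u, hu⟩ := T.eq_empty_or_nonempty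
  · exact ⟨⊥, bot_le, oddVerts_bot⟩
  have hone : 1 < (T ∩ (H.connectedComponentMk u).supp).ncard := by
    have hpos := Set.ncard_ne_zero_of_mem (s := T ∩ (H.connectedComponentMk u).supp) ⟨hu, rfl⟩
    grind [hT (H.connectedComponentMk u)]
  obtain ⟨v, ⟨hv, hvC⟩, hvu⟩ := Set.exists_ne_of_one_lt_ncard hone u
  have huv : H.Reachable u v := (ConnectedComponent.exact hvC).symm
  have hlt : (T ∆ ({u} ∆ {v})).ncard < n := hn ▸
    Set.ncard_lt_ncard ⟨fun x hx ↦ by grind, fun h ↦ by grind⟩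
  have heven (C : H.ConnectedComponent) : Even (T ∆ ({u} ∆ {v}) ∩ C.supp).ncard := by
    have hC : u ∈ C.supp ↔ v ∈ C.supp := by
      simp only [ConnectedComponent.mem_supp_iff,
        ConnectedComponent.sound huv]
    rw [Set.inter_symmDiff_distrib_right, ← Nat.not_odd_iff_even, odd_ncard_symmDiff]
    simpa [Nat.not_odd_iff_even.2 (hT C)] using even_ncard_symmDiff_singleton_inter hC
  obtain ⟨F, hF, hodd⟩ := ih _ hlt _ heven rfl
  obtain ⟨F', hF', hodd'⟩ := exists_le_oddVerts_eq_of_reachable huv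
  refine ⟨F ∆ F', symmDiff_le_of_le hF hF', ?_⟩
  rw [oddVerts_symmDiff, hodd, hodd', symmDiff_symmDiff_cancel_right]

end OddVerts

/-- The subgraph of `H` induced on `Y` has a spanning subgraph all of whose degrees are odd. The
spanning subgraph is encoded as a graph `F` on the whole vertex type without edges leaving `Y`. -/
def HasOddFactor {V : Type*} (H : SimpleGraph V) (Y : Set V) : Prop :=
  ∃ F ≤ H, F.support ⊆ Y ∧ oddVerts F = Y

section HasOddFactor

variable {V : Type*} {H : SimpleGraph V} {Y Z : Set V} {a b c d : V}

theorem hasOddFactor_empty (H : SimpleGraph V) : HasOddFactor H ∅ :=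
  ⟨⊥, bot_le, by simp, oddVerts_bot⟩

theorem support_edge_subset (a b : V) : (edge a b).support ⊆ {a, b} := by
  rintro x ⟨y, hxy⟩
  grind

theorem hasOddFactor_pair_iff : HasOddFactor H {a, b} ↔ H.Adj a b := by
  constructor
  · rintro ⟨F, hFH, hsupp, hodd⟩
    obtain ⟨x, hax⟩ : a ∈ F.support := oddVerts_subset_support F (hodd ▸ Set.mem_insert a {b})
    have hx : x ∈ ({a, b} : Set V) := hsupp ⟨a, hax.symm⟩
    obtain rfl : x = b := hx.resolve_left hax.ne'
    exact hFH hax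
  · intro hab
    refine ⟨edge a b, (edge_le_iff H).2 (.inr hab), support_edge_subset a b, ?_⟩
    rw [oddVerts_edge]
    grind [hab.ne]

variable [Finite V]

theorem HasOddFactor.even_ncard (hY : HasOddFactor H Y) : Even Y.ncard := by
  obtain ⟨F, -, -, rfl⟩ := hY
  exact even_ncard_oddVerts F

theorem HasOddFactor.union (hY : HasOddFactor H Y) (hZ : HasOddFactor H Z) (hYZ : Disjoint Y Z) :
    HasOddFactor H (Y ∪ Z) := by
  obtain ⟨F, hF, hFY, rfl⟩ := hY
  obtain ⟨F', hF', hFZ, rfl⟩ := hZ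
  refine ⟨F ∆ F', symmDiff_le_of_le hF hF',
    (support_symmDiff_subset F F').trans (Set.union_subset_union hFY hFZ), ?_⟩
  rw [oddVerts_symmDiff]
  exact hYZ.symmDiff_eq_sup

theorem hasOddFactor_claw (hab : H.Adj a b) (hac : H.Adj a c) (had : H.Adj a d)
    (hbc : b ≠ c) (hbd : b ≠ d) (hcd : c ≠ d) : HasOddFactor H {a, b, c, d} := by
  refine ⟨edge a b ∆ edge a c ∆ edge a d, ?_, ?_, ?_⟩
  · have hle {x : V} (hx : H.Adj a x) : edge a x ≤ H := (edge_le_iff H).2 (.inr hx)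
    exact symmDiff_le_of_le (symmDiff_le_of_le (hle hab) (hle hac)) (hle had)
  · have hsub {x : V} (hx : x ∈ ({b, c, d} : Set V)) : (edge a x).support ⊆ {a, b, c, d} :=
      (support_edge_subset a x).trans (by grind)
    refine (support_symmDiff_subset _ _).trans (Set.union_subset ?_ (hsub (by simp)))
    exact (support_symmDiff_subset _ _).trans
      (Set.union_subset (hsub (by simp)) (hsub (by simp)))
  · simp only [oddVerts_symmDiff, oddVerts_edge]
    ext x
    grind [hab.ne, hac.ne, had.ne]

theorem exists_odd_ncard_of_not_hasOddFactor (hY : ¬HasOddFactor H Y) :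
    ∃ P ⊆ Y, Odd P.ncard ∧ ∀ u ∈ P, ∀ v ∈ Y, H.Adj u v → v ∈ P := by
  have hcomp : ∃ C : (H.induce Y).spanningCoe.ConnectedComponent, Odd (Y ∩ C.supp).ncard := by
    by_contra! hodd
    simp only [Nat.not_odd_iff_even] at hodd
    obtain ⟨F, hF, hFY⟩ := exists_le_oddVerts_eq Y hodd
    refine hY ⟨F, hF.trans (H.spanningCoe_induce_le Y), ?_, hFY⟩
    exact (support_mono hF).trans
      ((H.induce Y).support_spanningCoe ▸ Subtype.coe_image_subset Y _)
  obtain ⟨C, hC⟩ := hcomp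
  refine ⟨Y ∩ C.supp, Set.inter_subset_left, hC, fun u hu v hv huv ↦ ⟨hv, ?_⟩⟩
  refine C.mem_supp_of_adj_mem_supp hu.2 ?_
  simpa [hv, hu.1] using huv

end HasOddFactor

theorem oddEdgeColorable_of_pairwise_disjoint {V : Type*} {G : SimpleGraph V} {k : ℕ} [NeZero k]
    (F : Fin k → SimpleGraph V) (hsup : ⨆ i, F i = G) (hdisj : Pairwise (Function.onFun Disjoint F))
    (hodd : ∀ i, (F i).support ⊆ oddVerts (F i)) : OddEdgeColorable G k := by
  classical
  have hcolor (e : Sym2 V) : ∃ i, e ∈ G.edgeSet → e ∈ (F i).edgeSet := by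
    by_cases he : e ∈ G.edgeSet
    · rw [← hsup, edgeSet_iSup] at he
      exact (Set.mem_iUnion.1 he).imp fun _ hi _ ↦ hi
    · exact ⟨0, fun h ↦ absurd h he⟩
  choose c hc using hcolor
  have hclass (i : Fin k) (e : Sym2 V) : e ∈ G.edgeSet ∧ c e = i ↔ e ∈ (F i).edgeSet := by
    refine ⟨fun ⟨he, hi⟩ ↦ hi ▸ hc e he, fun he ↦ ?_⟩
    have heG : e ∈ G.edgeSet := edgeSet_mono (hsup ▸ le_iSup F i) he
    refine ⟨heG, by_contra fun hne ↦ ?_⟩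
    exact Set.disjoint_left.1 (disjoint_edgeSet.2 (hdisj hne)) (hc e heG) he
  refine ⟨c, fun i v hne ↦ ?_⟩
  have hdeg : classDeg G c i v = ((F i).neighborSet v).ncard := by
    have hset : {e | e ∈ G.edgeSet ∧ c e = i ∧ v ∈ e} = (F i).incidenceSet v := by
      ext e
      exact and_assoc.symm.trans (and_congr_left' (hclass i e))
    rw [classDeg, hset]
    exact Nat.card_congr ((F i).incidenceSetEquivNeighborSet v)
  rw [hdeg] at hne ⊢
  exact hodd i (Set.nonempty_of_ncard_ne_zero hne)

/-- The spanning subgraph of `G` formed by the edges with at least one end in `P`. It is the core of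
the colour class that absorbs an odd component `P`. -/
def edgesMeeting {V : Type*} (G : SimpleGraph V) (P : Set V) : SimpleGraph V where
  Adj u v := G.Adj u v ∧ (u ∈ P ∨ v ∈ P)
  symm := ⟨fun _ _ h ↦ ⟨h.1.symm, h.2.symm⟩⟩
  loopless := ⟨fun _ h ↦ h.1.ne rfl⟩

section ThreeColors

variable {V : Type*} {G J : SimpleGraph V} {w : V} {P S : Set V}

theorem mem_oddVerts_edgesMeeting {v : V} (hv : v ∈ P) :
    v ∈ oddVerts (edgesMeeting G P) ↔ v ∈ oddVerts G := by
  have hnbr : (edgesMeeting G P).neighborSet v = G.neighborSet v := by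
    ext u
    simp [edgesMeeting, hv]
  simp only [oddVerts, Set.mem_ofPred_eq, hnbr]

theorem mem_oddVerts_between_singleton (hS : ∀ v ∈ S, G.Adj w v) {v : V} (hv : v ≠ w) :
    v ∈ oddVerts (G.between {w} S) ↔ v ∈ S := by
  by_cases hvS : v ∈ S
  · have hnbr : (G.between {w} S).neighborSet v = {w} := by
      ext u
      simp only [mem_neighborSet, between_adj, Set.mem_singleton_iff]
      grind [(hS v hvS).symm]
    simp [oddVerts, hnbr, hvS]
  · have hnbr : (G.between {w} S).neighborSet v = ∅ := by
      ext u
      simp [between_adj, hv, hvS]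
    simp [oddVerts, hnbr, hvS]

theorem oddEdgeColorable_three_of_disjoint {A : SimpleGraph V} (hA : A ≤ G) (hJ : J ≤ G)
    (hAJ : Disjoint A J) (hAodd : A.support ⊆ oddVerts A) (hJodd : J.support ⊆ oddVerts J)
    (hodd : (G \ (A ⊔ J)).support ⊆ oddVerts (G \ (A ⊔ J))) : OddEdgeColorable G 3 := by
  refine oddEdgeColorable_of_pairwise_disjoint ![A, J, G \ (A ⊔ J)] ?_ ?_ ?_
  · have hsup : A ⊔ J ⊔ G \ (A ⊔ J) = G := sup_sdiff_cancel_right (sup_le hA hJ)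
    simpa [iSup_fin_three] using hsup
  · have hrest : Disjoint (A ⊔ J) (G \ (A ⊔ J)) := disjoint_sdiff_self_right
    obtain ⟨hAR, hJR⟩ := disjoint_sup_left.1 hrest
    simp [Pairwise, Function.onFun, Fin.forall_fin_succ, hAJ, hAJ.symm, hAR, hAR.symm, hJR,
      hJR.symm]
  · simp [Fin.forall_fin_succ, *]

variable [Finite V]

-- Joining `w` to the vertices of `X` whose degree in `edgesMeeting G P` is even makes all degrees
-- on `P ∪ X` odd; since `P ∪ X` has odd size, the degree of `w` is then forced to be odd as well.
theorem exists_le_oddVerts_eq_insert {X : Set V} (hwP : w ∉ P) (hwX : w ∉ X)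
    (hPX : Disjoint P X) (hodd : Odd (P ∪ X).ncard) (hP : P ⊆ oddVerts G)
    (hX : ∀ v ∈ X, G.Adj w v) (hnbr : ∀ u ∈ P, ∀ v, G.Adj u v → v ∈ insert w (P ∪ X)) :
    ∃ A ≤ G, edgesMeeting G P ≤ A ∧ (∀ u ∈ X, ∀ v ∈ X, ¬A.Adj u v) ∧
      A.support ⊆ insert w (P ∪ X) ∧ oddVerts A = insert w (P ∪ X) := by
  set E := edgesMeeting G P with hE
  set S := X \ oddVerts E
  have hAdj {u v : V} : (E ⊔ G.between {w} S).Adj u v ↔ G.Adj u v ∧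
      (u ∈ P ∨ v ∈ P ∨ u = w ∧ v ∈ S ∨ u ∈ S ∧ v = w) := by
    simp only [sup_adj, hE, edgesMeeting, between_adj, Set.mem_singleton_iff]
    tauto
  have hsupp : (E ⊔ G.between {w} S).support ⊆ insert w (P ∪ X) := by
    intro u hu
    obtain ⟨v, huv⟩ := (mem_support _).1 hu
    rw [hAdj] at huv
    grind [G.adj_comm u v]
  have hdisj : Disjoint E (G.between {w} S) := by
    rw [disjoint_left]
    simp only [hE, edgesMeeting, between_adj, Set.mem_singleton_iff]
    grind
  have hmem {v : V} (hv : v ≠ w) : v ∈ oddVerts (E ⊔ G.between {w} S) ↔ v ∈ P ∪ X := by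
    have hvS := mem_oddVerts_between_singleton (S := S) (fun u hu ↦ hX u hu.1) hv
    have hvP : v ∈ P → (v ∈ oddVerts E ↔ v ∈ oddVerts G) := mem_oddVerts_edgesMeeting
    have hvA := @oddVerts_subset_support _ (E ⊔ G.between {w} S) v
    rw [oddVerts_sup_of_disjoint hdisj, Set.mem_symmDiff] at hvA ⊢
    grind
  have hw : w ∈ oddVerts (E ⊔ G.between {w} S) := by
    by_contra hw
    have hverts : oddVerts (E ⊔ G.between {w} S) = P ∪ X := by
      ext v
      by_cases hv : v = w
      · grind
      · exact hmem hv
    exact Nat.not_even_iff_odd.2 hodd (hverts ▸ even_ncard_oddVerts _)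
  refine ⟨E ⊔ G.between {w} S, fun u v huv ↦ (hAdj.1 huv).1, le_sup_left, by grind, hsupp, ?_⟩
  ext v
  by_cases hv : v = w
  · simp [hv, hw]
  · simp [hmem hv, hv]

theorem oddEdgeColorable_three_of_odd_ncard (hG : oddVerts G = {w}ᶜ)
    (hadj : ∀ v, v ≠ w → G.Adj w v) (hJG : J ≤ G) (hJ : J.support ⊆ oddVerts J)
    (hwJ : w ∉ oddVerts J) (hwP : w ∉ P) (hPJ : Disjoint P (oddVerts J)) (hP : Odd P.ncard)
    (hnbr : ∀ u ∈ P, ∀ v, G.Adj u v → v ∈ insert w (P ∪ oddVerts J)) :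
    OddEdgeColorable G 3 := by
  have hcard : Odd (P ∪ oddVerts J).ncard := by
    rw [Set.ncard_union_eq hPJ]
    exact hP.add_even (even_ncard_oddVerts J)
  obtain ⟨A, hAG, hPA, hAX, hAsupp, hAodd⟩ := exists_le_oddVerts_eq_insert hwP hwJ hPJ hcard
    (by grind) (fun v hv ↦ hadj v (by grind)) hnbr
  have hAJ : Disjoint A J := disjoint_left.2 fun u v hA huv ↦
    hAX u (hJ ⟨v, huv⟩) v (hJ ⟨u, huv.symm⟩) hA
  refine oddEdgeColorable_three_of_disjoint hAG hJG hAJ (hAodd ▸ hAsupp) hJ ?_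
  have hrest : oddVerts (G \ (A ⊔ J)) = Pᶜ := by
    rw [oddVerts_sdiff_of_le (sup_le hAG hJG), oddVerts_sup_of_disjoint hAJ, hG, hAodd]
    ext v
    grind
  rw [hrest]
  rintro v ⟨u, huv, hnot⟩ hv
  exact hnot (.inl (hPA ⟨huv, .inl hv⟩))

theorem oddEdgeColorable_three_of_not_hasOddFactor_compl (hG : oddVerts G = {w}ᶜ)
    (hadj : ∀ v, v ≠ w → G.Adj w v) {Y : Set {v | v ≠ w}}
    (hY : HasOddFactor (G.induce {v | v ≠ w}) Y)
    (hYc : ¬HasOddFactor (G.induce {v | v ≠ w}) Yᶜ) : OddEdgeColorable G 3 := by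
  obtain ⟨F, hF, hFY, rfl⟩ := hY
  obtain ⟨P, hPY, hP, hPclosed⟩ := exists_odd_ncard_of_not_hasOddFactor hYc
  refine oddEdgeColorable_three_of_odd_ncard (J := F.spanningCoe) (P := (↑) '' P) hG hadj
    ?_ ?_ ?_ ?_ ?_ ?_ ?_
  · exact (map_le_iff_le_comap _ _ _).2 hF
  · rw [oddVerts_spanningCoe, support_spanningCoe]
    exact Set.image_mono hFY
  · simp [oddVerts_spanningCoe]
  · simp
  · rw [oddVerts_spanningCoe, Set.disjoint_image_iff Subtype.val_injective]
    exact Set.disjoint_left.2 hPY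
  · rwa [Set.ncard_image_of_injective _ Subtype.val_injective]
  · rintro _ ⟨u, hu, rfl⟩ v huv
    rw [oddVerts_spanningCoe]
    by_cases hv : v = w
    · exact .inl hv
    by_cases hvF : ⟨v, hv⟩ ∈ oddVerts F
    · exact .inr (.inr ⟨_, hvF, rfl⟩)
    · exact .inr (.inl ⟨_, hPclosed u hu ⟨v, hv⟩ hvF huv, rfl⟩)

end ThreeColors

/-- The vertex sets `Y` for which `H[Y]` has a spanning odd subgraph are closed under complements.
For `H = G - w` this is the consequence drawn from `G` not being odd 3-edge-colorable. -/
def OddFactorsComplClosed {V : Type*} (H : SimpleGraph V) : Prop :=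
  ∀ ⦃Y : Set V⦄, HasOddFactor H Y → HasOddFactor H Yᶜ

namespace OddFactorsComplClosed

variable {V : Type*} [Finite V] {H : SimpleGraph V} {Y Z : Set V} {a b c d : V}

theorem even_card (h : OddFactorsComplClosed H) : Even (Nat.card V) := by
  simpa using (h (hasOddFactor_empty H)).even_ncard

theorem hasOddFactor_sdiff (h : OddFactorsComplClosed H) (hY : HasOddFactor H Y)
    (hZ : HasOddFactor H Z) (hZY : Z ⊆ Y) : HasOddFactor H (Y \ Z) := by
  have hdisj : Disjoint Yᶜ Z := Set.disjoint_compl_left_iff_subset.2 hZY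
  have hcompl := h ((h hY).union hZ hdisj)
  rwa [Set.compl_union, compl_compl] at hcompl

theorem adj_of_path (h : OddFactorsComplClosed H) (hab : H.Adj a b) (hbc : H.Adj b c)
    (hcd : H.Adj c d) (hac : a ≠ c) (hbd : b ≠ d) (had : a ≠ d) : H.Adj a d := by
  have hpath : HasOddFactor H ({a, b} ∪ {c, d}) :=
    (hasOddFactor_pair_iff.2 hab).union (hasOddFactor_pair_iff.2 hcd) (by grind [hbc.ne])
  have hends := h.hasOddFactor_sdiff hpath (hasOddFactor_pair_iff.2 hbc) (by grind)
  rw [← hasOddFactor_pair_iff]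
  convert hends using 1
  grind [hab.ne, hbc.ne, hcd.ne]

theorem adj_of_claw (h : OddFactorsComplClosed H) (hab : H.Adj a b) (hac : H.Adj a c)
    (had : H.Adj a d) (hbc : b ≠ c) (hbd : b ≠ d) (hcd : c ≠ d) : H.Adj c d := by
  have hleaves := h.hasOddFactor_sdiff (hasOddFactor_claw hab hac had hbc hbd hcd)
    (hasOddFactor_pair_iff.2 hab) (by grind)
  rw [← hasOddFactor_pair_iff]
  convert hleaves using 1
  grind [hac.ne, had.ne]

theorem isClique_neighborSet (h : OddFactorsComplClosed H)
    (ha : 2 < (H.neighborSet a).ncard) : H.IsClique (H.neighborSet a) := by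
  intro c hc d hd hcd
  obtain ⟨b, hb, hbcd⟩ := Set.exists_mem_notMem_of_ncard_lt_ncard
    ((Set.ncard_pair hcd).trans_lt ha)
  exact h.adj_of_claw hb hc hd (by grind) (by grind) hcd

-- The closed neighbourhood of `a` is a clique, so the neighbours of `a` have degree at least that
-- of `a`, and their closed neighbourhoods are cliques too.
theorem adj_of_two_lt_ncard_neighborSet (h : OddFactorsComplClosed H) (hH : H.Preconnected)
    (ha : 2 < (H.neighborSet a).ncard) {v : V} (hv : v ≠ a) : H.Adj a v := by
  have hclosed ⦃x y : V⦄ (hx : x ∈ insert a (H.neighborSet a)) (hxy : H.Adj x y) :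
      y ∈ insert a (H.neighborSet a) := by
    obtain rfl | hax := hx
    · exact .inr hxy
    have hsub : insert a (H.neighborSet a \ {x}) ⊆ H.neighborSet x := by
      rintro u (rfl | ⟨hu, hux⟩)
      · exact hax.symm
      · exact h.isClique_neighborSet ha hax hu (Ne.symm hux)
    have hdeg : 2 < (H.neighborSet x).ncard := by
      refine ha.trans_le ?_
      rw [← Set.ncard_exchange (notMem_neighborSet_self H) hax]
      exact Set.ncard_le_ncard hsub
    by_cases hya : y = a
    · exact .inl hya
    · exact .inr (h.isClique_neighborSet hdeg hax.symm hxy (Ne.symm hya))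
  exact (mem_of_adj_closed_of_reachable hclosed (hH a v) (.inl rfl)).resolve_left hv

theorem ncard_neighborSet_le_two (h : OddFactorsComplClosed H) (hH : H.Preconnected)
    (heven : oddVerts H = ∅) (a : V) : (H.neighborSet a).ncard ≤ 2 := by
  by_contra! ha
  have hnbr : H.neighborSet a = {a}ᶜ := by
    ext v
    exact ⟨fun hv ↦ hv.ne', h.adj_of_two_lt_ncard_neighborSet hH ha⟩
  have hcard := Set.ncard_add_ncard_compl {a}
  rw [Set.ncard_singleton, ← hnbr] at hcard
  have hodd : a ∉ oddVerts H := heven ▸ Set.notMem_empty a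
  have := h.even_card
  simp only [oddVerts, Set.mem_ofPred_eq] at hodd
  grind

theorem ncard_neighborSet_eq_two (h : OddFactorsComplClosed H) (hH : H.Connected)
    (heven : oddVerts H = ∅) (a : V) : (H.neighborSet a).ncard = 2 := by
  have := hH.nonempty
  have : Nontrivial V := by
    rw [← Finite.one_lt_card_iff_nontrivial]
    grind [h.even_card, Nat.card_pos (α := V)]
  have hpos : 0 < (H.neighborSet a).ncard := by
    rw [Set.ncard_pos]
    exact hH.preconnected.exists_adj_of_nontrivial a
  have hodd : a ∉ oddVerts H := heven ▸ Set.notMem_empty a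
  have := h.ncard_neighborSet_le_two hH.preconnected heven a
  simp only [oddVerts, Set.mem_ofPred_eq] at hodd
  grind

end OddFactorsComplClosed

theorem nonempty_iso_of_injective_hom {V W : Type*} [Finite W] [Nonempty V] {F : SimpleGraph V}
    {H : SimpleGraph W} (hH : H.Preconnected) (f : F →g H) (hf : Function.Injective f)
    (hdeg : ∀ v, (H.neighborSet (f v)).ncard ≤ (F.neighborSet v).ncard) : Nonempty (F ≃g H) := by
  have hnbr (v : V) : f '' F.neighborSet v = H.neighborSet (f v) := by
    refine Set.eq_of_subset_of_ncard_le ?_ ?_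
    · rintro _ ⟨u, hu, rfl⟩
      exact f.map_adj hu
    · rw [Set.ncard_image_of_injective _ hf]
      exact hdeg v
  have hsurj : Function.Surjective f := by
    obtain ⟨v⟩ := ‹Nonempty V›
    refine fun y ↦ mem_of_adj_closed_of_reachable (S := Set.range f) ?_ (hH (f v) y) ⟨v, rfl⟩
    rintro _ y ⟨x, rfl⟩ hxy
    exact Set.image_subset_range f _ ((hnbr x).ge hxy)
  have hadj (u v : V) : H.Adj (f u) (f v) ↔ F.Adj u v := by
    rw [← mem_neighborSet, ← hnbr u, hf.mem_set_image, mem_neighborSet]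
  exact ⟨⟨Equiv.ofBijective f ⟨hf, hsurj⟩, hadj _ _⟩⟩

theorem nonempty_cycleGraph_iso_of_isCycle {V : Type*} [Finite V] {H : SimpleGraph V}
    (hH : H.Preconnected) (htwo : ∀ v, (H.neighborSet v).ncard = 2) {v : V} {p : H.Walk v v}
    (hp : p.IsCycle) : Nonempty (cycleGraph p.length ≃g H) := by
  obtain ⟨n, hn⟩ := Nat.exists_eq_add_of_le' hp.three_le_length
  obtain ⟨f⟩ := (cycleGraph_isContained_iff hp.three_le_length).2 ⟨v, p, hp, rfl⟩
  rw [hn] at f ⊢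
  refine nonempty_iso_of_injective_hom hH f.toHom f.injective fun i ↦ ?_
  rw [htwo, Set.ncard_eq_toFinset_card', ← neighborFinset,
    card_neighborFinset_eq_degree, cycleGraph_degree_three_le]

theorem OddFactorsComplClosed.nonempty_cycleGraph_four_iso {V : Type*} [Finite V]
    {H : SimpleGraph V} (h : OddFactorsComplClosed H) (hH : H.Connected)
    (heven : oddVerts H = ∅) : Nonempty (cycleGraph 4 ≃g H) := by
  have htwo := h.ncard_neighborSet_eq_two hH heven
  obtain ⟨a⟩ := hH.nonempty
  obtain ⟨b, c, hbc, hNa⟩ := Set.ncard_eq_two.1 (htwo a)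
  have hab : H.Adj a b := (hNa ▸ .inl rfl : b ∈ H.neighborSet a)
  have hac : H.Adj a c := (hNa ▸ .inr rfl : c ∈ H.neighborSet a)
  obtain ⟨d, hbd, hda⟩ := Set.exists_ne_of_one_lt_ncard (htwo b ▸ one_lt_two) a
  replace hbd : H.Adj b d := hbd
  obtain rfl | hdc := eq_or_ne d c
  · have htriangle : (Walk.cons hab (.cons hbd (.cons hac.symm .nil))).IsCycle := by
      simp [Walk.cons_isCycle_iff, hab.ne, hac.ne, hbd.ne, hab.ne', hac.ne']
    obtain ⟨e⟩ := nonempty_cycleGraph_iso_of_isCycle hH.preconnected htwo htriangle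
    have hcard : 3 = Nat.card V := by simpa using Nat.card_congr e.toEquiv
    exact absurd h.even_card (hcard ▸ by decide)
  · have hcd : H.Adj c d := h.adj_of_path hac.symm hab hbd hbc.symm hda.symm hdc.symm
    have hsquare : (Walk.cons hab (.cons hbd (.cons hcd.symm (.cons hac.symm .nil)))).IsCycle := by
      simp [Walk.cons_isCycle_iff, hab.ne, hac.ne, hbd.ne, hab.ne', hac.ne', hdc, hda,
        hda.symm, hbc]
    exact nonempty_cycleGraph_iso_of_isCycle hH.preconnected htwo hsquare

section DominatingVertex

variable {V V' : Type*} {G : SimpleGraph V} {G' : SimpleGraph V'} {w : V} {w' : V'}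

theorem oddVerts_induce_ne [Finite V] (hadj : ∀ v, v ≠ w → G.Adj w v) :
    oddVerts (G.induce {v | v ≠ w}) = (↑) ⁻¹' (oddVerts G)ᶜ := by
  ext v
  have hnbr : G.neighborSet v = insert w ((↑) '' (G.induce {v | v ≠ w}).neighborSet v) := by
    ext u
    by_cases hu : u = w
    · simp [hu, (hadj v v.2).symm]
    · simp [hu]
  have hcard : (G.neighborSet v).ncard = ((G.induce {v | v ≠ w}).neighborSet v).ncard + 1 := by
    rw [hnbr, Set.ncard_insert_of_notMem (by simp),
      Set.ncard_image_of_injective _ Subtype.val_injective]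
  simp [oddVerts, hcard, Nat.odd_add_one]

theorem nonempty_iso_of_induce_ne_iso (hadj : ∀ v, v ≠ w → G.Adj w v)
    (hadj' : ∀ v, v ≠ w' → G'.Adj w' v)
    (e : G.induce {v | v ≠ w} ≃g G'.induce {v | v ≠ w'}) : Nonempty (G ≃g G') := by
  classical
  let e₀ : {v // v ≠ w} ≃ {v // v ≠ w'} := e.toEquiv
  let f : V ≃ V' := (Equiv.optionSubtypeNe w).symm.trans
    (e₀.optionCongr.trans (Equiv.optionSubtypeNe w'))
  have hfw : f w = w' := by simp [f]
  have hf (v : V) (hv : v ≠ w) : f v = e ⟨v, hv⟩ := by simp [f, e₀, hv]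
  have hfw_adj (v : V) : G'.Adj w' (f v) ↔ G.Adj w v := by
    by_cases hv : v = w
    · simp [hv, hfw]
    · simp [hadj v hv, hadj' (f v) (hfw ▸ f.injective.ne hv)]
  refine ⟨⟨f, fun {u v} ↦ ?_⟩⟩
  by_cases hu : u = w
  · rw [hu, hfw, hfw_adj]
  by_cases hv : v = w
  · rw [hv, hfw, G'.adj_comm, G.adj_comm, hfw_adj]
  rw [hf u hu, hf v hv]
  exact e.map_adj_iff (v := ⟨u, hu⟩) (w := ⟨v, hv⟩)

theorem wheelFour_adj_four {v : Fin 5} (hv : v ≠ 4) : wheelFour.Adj 4 v := by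
  fin_cases v <;> simp [wheelFour] at hv ⊢

theorem nonempty_cycleGraph_four_iso_wheelFour_induce :
    Nonempty (cycleGraph 4 ≃g wheelFour.induce {v | v ≠ 4}) :=
  ⟨⟨finSuccAboveEquiv 4, by
    simp only [wheelFour, comap_adj, fromEdgeSet_adj]
    decide⟩⟩

end DominatingVertex

/-- Let `G` be a connected graph of odd order whose unique vertex of even degree `w`
is adjacent to all other vertices, with `G - w` connected.  If `G` is not isomorphic
to the wheel `W₄`, then `G` is odd 3-edge-colorable. -/
theorem stmt8 {V : Type*} [Fintype V] (G : SimpleGraph V)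
    (hconn : G.Connected) (hodd : Odd (Fintype.card V)) (w : V)
    (hw : Even (G.neighborSet w).ncard)
    (honly : ∀ v : V, v ≠ w → Odd (G.neighborSet v).ncard)
    (hadj : ∀ v : V, v ≠ w → G.Adj w v)
    (hGw : (G.induce {v : V | v ≠ w}).Connected)
    (hW4 : ¬ Nonempty (G ≃g wheelFour)) :
    OddEdgeColorable G 3 := by
  have hG : oddVerts G = {w}ᶜ := by
    ext v
    refine ⟨?_, honly v⟩
    rintro hv rfl
    exact Nat.not_odd_iff_even.2 hw hv
  by_contra hcol
  have hclosed : OddFactorsComplClosed (G.induce {v | v ≠ w}) := fun Y hY ↦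
    by_contra fun hYc ↦ hcol (oddEdgeColorable_three_of_not_hasOddFactor_compl hG hadj hY hYc)
  have heven : oddVerts (G.induce {v | v ≠ w}) = ∅ := by
    rw [oddVerts_induce_ne hadj, hG, compl_compl, Set.preimage_singleton_eq_empty]
    simp
  obtain ⟨e⟩ := hclosed.nonempty_cycleGraph_four_iso hGw heven
  obtain ⟨e'⟩ := nonempty_cycleGraph_four_iso_wheelFour_induce
  exact hW4 (nonempty_iso_of_induce_ne_iso hadj (fun _ ↦ wheelFour_adj_four) (e.symm.trans e'))
end

section
/- Let G be a connected graph and S ⊆ V(G) with |S| even. Then G has a spanning subgraph F such that every non-trivial connected component of F contains a vertex of S, every vertex of S has odd degree in F, and every vertex not in S has even degree in F. -/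
/-!
The edge sets whose odd-degree vertices are exactly a given set `T` (the `T`-joins) behave linearly
over `𝔽₂`: the symmetric difference of a `T`-join and a `U`-join is a `T ∆ U`-join. Summing the
edges of a walk from `u` to `v` gives a `{u} ∆ {v}`-join, and a finite set of even size is a sum of
pairs, so in a connected graph it has a join. Deleting the edges of all components of an `S`-join
that miss `S` changes the degrees only at vertices outside `S`, where they drop to zero, so the
parities survive.
-/

open scoped symmDiff

theorem odd_ncard_symmDiff_iff {α : Type*} {s t : Set α} (hs : s.Finite) (ht : t.Finite) :
    Odd (s ∆ t).ncard ↔ ¬(Odd s.ncard ↔ Odd t.ncard) := by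
  have ncard_symmDiff : (s ∆ t).ncard = (s \ t).ncard + (t \ s).ncard :=
    Set.ncard_union_eq disjoint_sdiff_sdiff hs.sdiff ht.sdiff
  have ncard_left := Set.ncard_inter_add_ncard_sdiff_eq_ncard s t hs
  have ncard_right := Set.ncard_inter_add_ncard_sdiff_eq_ncard t s ht
  rw [Set.inter_comm] at ncard_right
  grind

section TJoin

variable {V : Type*} {G H K : SimpleGraph V} {S T U : Set V} {u v s : V}

theorem edgeSet_symmDiff (H K : SimpleGraph V) : (H ∆ K).edgeSet = H.edgeSet ∆ K.edgeSet := by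
  simp only [symmDiff_def, SimpleGraph.edgeSet_sup, SimpleGraph.edgeSet_sdiff, Set.sup_eq_union]

theorem incidenceSet_symmDiff (H K : SimpleGraph V) (v : V) :
    (H ∆ K).incidenceSet v = H.incidenceSet v ∆ K.incidenceSet v := by
  ext e
  simp only [SimpleGraph.incidenceSet, edgeSet_symmDiff, Set.mem_symmDiff,
    Set.mem_ofPred_eq]
  tauto

theorem incidenceSet_edge (huv : u ≠ v) (w : V) :
    (SimpleGraph.edge u v).incidenceSet w = {e | e = s(u, v) ∧ (w = u ∨ w = v)} := by
  ext e
  simp only [SimpleGraph.incidenceSet, SimpleGraph.edgeSet_edge_of_ne huv, Set.mem_singleton_iff,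
    Set.mem_ofPred_eq]
  grind

/-- `H` is a `T`-join: the vertices of odd degree in `H` are exactly those of `T`. The degree is
the number of incident edges; as `ncard` is `0` on infinite sets, `H` is required to have finitely
many edges. -/
structure IsTJoin (H : SimpleGraph V) (T : Set V) : Prop where
  finite_edgeSet : H.edgeSet.Finite
  odd_ncard_incidenceSet_iff (v : V) : Odd (H.incidenceSet v).ncard ↔ v ∈ T

namespace IsTJoin

theorem finite_incidenceSet (hH : IsTJoin H T) (v : V) : (H.incidenceSet v).Finite :=
  hH.finite_edgeSet.subset (H.incidenceSet_subset v)

theorem bot : IsTJoin (⊥ : SimpleGraph V) ∅ where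
  finite_edgeSet := by simp
  odd_ncard_incidenceSet_iff v := by simp [SimpleGraph.incidenceSet]

theorem symmDiff (hH : IsTJoin H T) (hK : IsTJoin K U) : IsTJoin (H ∆ K) (T ∆ U) where
  finite_edgeSet := by
    rw [edgeSet_symmDiff]
    exact hH.finite_edgeSet.symmDiff hK.finite_edgeSet
  odd_ncard_incidenceSet_iff v := by
    rw [incidenceSet_symmDiff,
      odd_ncard_symmDiff_iff (hH.finite_incidenceSet v) (hK.finite_incidenceSet v),
      hH.odd_ncard_incidenceSet_iff, hK.odd_ncard_incidenceSet_iff, Set.mem_symmDiff]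
    tauto

theorem edge (u v : V) : IsTJoin (SimpleGraph.edge u v) ({u} ∆ {v}) := by
  obtain rfl | huv := eq_or_ne u v
  · rw [SimpleGraph.edge_self_eq_bot, symmDiff_self]
    exact bot
  refine ⟨(Set.finite_singleton _).subset SimpleGraph.edgeSet_edge_subset, fun w ↦ ?_⟩
  rw [incidenceSet_edge huv]
  by_cases hw : w = u ∨ w = v
  · simp only [hw, and_true, Set.ofPred_eq_eq_singleton, Set.ncard_singleton, odd_one, true_iff]
    grind
  · simp only [hw, and_false, Set.ofPred_false, Set.ncard_empty]
    grind

end IsTJoin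

theorem exists_isTJoin_symmDiff (hT : ∃ H ≤ G, IsTJoin H T) (hU : ∃ K ≤ G, IsTJoin K U) :
    ∃ L ≤ G, IsTJoin L (T ∆ U) := by
  obtain ⟨H, hHG, hH⟩ := hT
  obtain ⟨K, hKG, hK⟩ := hU
  exact ⟨H ∆ K, symmDiff_le_sup.trans (sup_le hHG hKG), hH.symmDiff hK⟩

theorem exists_isTJoin_of_reachable (huv : G.Reachable u v) :
    ∃ H ≤ G, IsTJoin H ({u} ∆ {v}) := by
  obtain ⟨p⟩ := huv
  induction p with
  | nil => exact ⟨⊥, bot_le, by simpa using IsTJoin.bot⟩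
  | @cons u w v huw _ ih =>
    have hedge : ∃ H ≤ G, IsTJoin H ({u} ∆ {w}) :=
      ⟨SimpleGraph.edge u w, (SimpleGraph.edge_le_iff G).2 (.inr huw), .edge u w⟩
    simpa only [symmDiff_assoc, symmDiff_symmDiff_cancel_left] using
      exists_isTJoin_symmDiff hedge ih

theorem exists_isTJoin_of_even_ncard (hG : G.Preconnected) (hTfin : T.Finite)
    (hT : Even T.ncard) : ∃ H ≤ G, IsTJoin H T := by
  -- An odd set is carried through the induction with its parity corrected at an arbitrary vertex.
  suffices (Even T.ncard → ∃ H ≤ G, IsTJoin H T) ∧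
      (Odd T.ncard → ∀ r, ∃ H ≤ G, IsTJoin H (T ∆ {r})) from this.1 hT
  clear hT
  induction T, hTfin using Set.Finite.induction_on with
  | empty => exact ⟨fun _ ↦ ⟨⊥, bot_le, .bot⟩, by simp⟩
  | @insert a T ha hTfin ih =>
    have insert_eq : insert a T = T ∆ {a} := by
      rw [(Set.disjoint_singleton_right.2 ha).symmDiff_eq_sup]
      exact Set.union_singleton.symm
    rw [Set.ncard_insert_of_notMem ha hTfin, insert_eq, Nat.even_add_one, Nat.odd_add_one,
      Nat.not_even_iff_odd, Nat.not_odd_iff_even]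
    refine ⟨fun hodd ↦ ih.2 hodd a, fun heven r ↦ ?_⟩
    rw [symmDiff_assoc]
    exact exists_isTJoin_symmDiff (ih.1 heven) (exists_isTJoin_of_reachable (hG a r))

/-- The spanning subgraph of `H` that keeps the edges of exactly those connected components of `H`
that contain a vertex of `S`. -/
def componentsMeeting (H : SimpleGraph V) (S : Set V) : SimpleGraph V where
  Adj u v := H.Adj u v ∧ ∃ s ∈ S, H.Reachable u s
  symm := ⟨fun _ _ ⟨huv, s, hs, hus⟩ ↦ ⟨huv.symm, s, hs, huv.symm.reachable.trans hus⟩⟩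

theorem componentsMeeting_le (H : SimpleGraph V) (S : Set V) : componentsMeeting H S ≤ H :=
  fun _ _ ↦ And.left

theorem incidenceSet_componentsMeeting_of_reachable (hs : s ∈ S) (hvs : H.Reachable v s) :
    (componentsMeeting H S).incidenceSet v = H.incidenceSet v := by
  refine Set.Subset.antisymm (fun e he ↦ ?_) (fun e he ↦ ?_) <;>
    obtain ⟨w, rfl⟩ := Sym2.mem_iff_exists.1 he.2 <;>
    rw [SimpleGraph.mem_incidenceSet] at he ⊢
  · exact he.1
  · exact ⟨he, s, hs, hvs⟩

theorem exists_reachable_of_mem_incidenceSet_componentsMeeting {e : Sym2 V}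
    (he : e ∈ (componentsMeeting H S).incidenceSet v) : ∃ s ∈ S, H.Reachable v s := by
  obtain ⟨w, rfl⟩ := Sym2.mem_iff_exists.1 he.2
  exact ((SimpleGraph.mem_incidenceSet _ v w).1 he).2

theorem reachable_componentsMeeting (hs : s ∈ S) (hvs : H.Reachable v s) :
    (componentsMeeting H S).Reachable v s := by
  obtain ⟨p⟩ := hvs
  induction p with
  | nil => rfl
  | @cons u w s huw p ih =>
    have adj : (componentsMeeting H S).Adj u w :=
      ⟨huw, s, hs, huw.reachable.trans p.reachable⟩
    exact adj.reachable.trans (ih hs)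

theorem isTJoin_componentsMeeting (hH : IsTJoin H T) : IsTJoin (componentsMeeting H T) T where
  finite_edgeSet :=
    hH.finite_edgeSet.subset (SimpleGraph.edgeSet_subset_edgeSet.2 (componentsMeeting_le H T))
  odd_ncard_incidenceSet_iff v := by
    by_cases hv : ∃ t ∈ T, H.Reachable v t
    · obtain ⟨t, ht, hvt⟩ := hv
      rw [incidenceSet_componentsMeeting_of_reachable ht hvt, hH.odd_ncard_incidenceSet_iff]
    · have incidenceSet_eq_empty : (componentsMeeting H T).incidenceSet v = ∅ :=
        Set.eq_empty_of_forall_notMem fun _ he ↦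
          hv (exists_reachable_of_mem_incidenceSet_componentsMeeting he)
      have notMem : v ∉ T := fun hvT ↦ hv ⟨v, hvT, .rfl⟩
      simp [incidenceSet_eq_empty, notMem]

end TJoin

theorem stmt13_general {V : Type*} (G : SimpleGraph V) (hG : G.Preconnected) (S : Set V)
    (hSfin : S.Finite) (hS : Even S.ncard) :
    ∃ F ⊆ G.edgeSet, F.Finite ∧
      (∀ v ∈ S, Odd {e : Sym2 V | e ∈ F ∧ v ∈ e}.ncard) ∧
      (∀ v ∉ S, Even {e : Sym2 V | e ∈ F ∧ v ∈ e}.ncard) ∧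
      (∀ v : V, {e : Sym2 V | e ∈ F ∧ v ∈ e}.ncard ≠ 0 →
        ∃ s ∈ S, (SimpleGraph.fromEdgeSet F).Reachable v s) := by
  obtain ⟨H, hHG, hH⟩ := exists_isTJoin_of_even_ncard hG hSfin hS
  have join := isTJoin_componentsMeeting hH
  refine ⟨(componentsMeeting H S).edgeSet,
    SimpleGraph.edgeSet_subset_edgeSet.2 ((componentsMeeting_le H S).trans hHG),
    join.finite_edgeSet, fun v hv ↦ (join.odd_ncard_incidenceSet_iff v).2 hv,
    fun v hv ↦ Nat.not_odd_iff_even.1 (mt (join.odd_ncard_incidenceSet_iff v).1 hv),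
    fun v hv ↦ ?_⟩
  obtain ⟨e, he⟩ := Set.nonempty_of_ncard_ne_zero hv
  obtain ⟨s, hs, hvs⟩ := exists_reachable_of_mem_incidenceSet_componentsMeeting he
  rw [SimpleGraph.fromEdgeSet_edgeSet]
  exact ⟨s, hs, reachable_componentsMeeting hs hvs⟩

/-- Let `G` be a connected graph and `S` a set of vertices of even cardinality.  Then `G`
has a spanning subgraph `F` (given by its edge set) such that every vertex of `S` has odd
degree in `F`, every vertex outside `S` has even degree in `F`, and every non-trivial
component of `F` (i.e. every vertex incident to an edge of `F`) contains a vertex of `S`. -/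
theorem stmt13 {V : Type*} [Fintype V] (G : SimpleGraph V)
    (hconn : G.Connected) (S : Set V) (hS : Even S.ncard) :
    ∃ F ⊆ G.edgeSet,
      (∀ v ∈ S, Odd {e : Sym2 V | e ∈ F ∧ v ∈ e}.ncard) ∧
      (∀ v ∉ S, Even {e : Sym2 V | e ∈ F ∧ v ∈ e}.ncard) ∧
      (∀ v : V, {e : Sym2 V | e ∈ F ∧ v ∈ e}.ncard ≠ 0 →
        ∃ s ∈ S, (SimpleGraph.fromEdgeSet F).Reachable v s) := by
  obtain ⟨F, hFG, -, hF⟩ := stmt13_general G hconn.preconnected S S.toFinite hS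
  exact ⟨F, hFG, hF⟩
end

section
/- Let G be a connected Eulerian simple graph (connected, all degrees even) with at least 3 vertices. Then there exist two adjacent vertices w and u such that both G − w and G − {w, u} are connected. -/
/-!
Take a longest path `w, u, x, …`. All neighbours of `w` lie on it. A component of `G - {w, u}`
sends an edge to `w` or to `u`. In the first case it meets the path beyond `u`. In the second,
let `c` be its vertex adjacent to `u`: if `c` is off the path, then `c, u, x, …` is again a longest
path, so all neighbours of `c` lie on it, and one of them is not `u` because the degree of `c`,
being even, is not one. Either way the component contains `x`, so `G - {w, u}` is connected, and
so is `G - w`, as `u` is adjacent to `x`.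
-/

open SimpleGraph

section LongestPath

variable {V : Type*} {G : SimpleGraph V} {c u v w x : V} {s : Set V}

theorem neighborSet_nontrivial_of_even_ncard [Nontrivial V] [Finite (G.neighborSet v)]
    (hG : G.Preconnected) (hv : Even (G.neighborSet v).ncard) :
    (G.neighborSet v).Nontrivial := by
  obtain ⟨a, ha⟩ := hG.exists_adj_of_nontrivial v
  have hpos : 0 < (G.neighborSet v).ncard := (Set.ncard_pos (Set.toFinite _)).2 ⟨a, ha⟩
  rw [← Set.one_lt_ncard_iff_nontrivial]
  obtain ⟨k, hk⟩ := hv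
  lia

theorem connected_induce_insert_of_adj (hs : (G.induce s).Preconnected) (hx : x ∈ s)
    (hux : G.Adj u x) : (G.induce (insert u s)).Connected :=
  connected_induce_union (s := {u}) .of_subsingleton hs rfl hx hux

theorem reachable_induce_of_mem_support (p : G.Walk u v) (hp : ∀ y ∈ p.support, y ∈ s)
    (hx : x ∈ p.support) :
    (G.induce s).Reachable ⟨u, hp u p.start_mem_support⟩ ⟨x, hp x hx⟩ := by
  classical
  exact ⟨(p.takeUntil x hx).induce s fun y hy ↦ hp y (p.support_takeUntil_subset_support hx hy)⟩

theorem exists_reachable_induce_adj_notMem (hG : G.Preconnected) (hw : w ∉ s) (y : s) :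
    ∃ c : s, (G.induce s).Reachable y c ∧ ∃ a ∉ s, G.Adj c a := by
  obtain ⟨p⟩ := hG y w
  obtain ⟨⟨⟨b, a⟩, hba⟩, -, ⟨c, hyc, rfl⟩, ha⟩ :=
    p.exists_boundary_dart (Subtype.val '' {c : s | (G.induce s).Reachable y c})
      ⟨y, .refl y, rfl⟩ (by rintro ⟨c, -, rfl⟩; exact hw c.2)
  refine ⟨c, hyc, a, fun has ↦ ha ⟨⟨a, has⟩, ?_, rfl⟩, hba⟩
  exact hyc.trans (Adj.reachable (induce_adj.2 hba))

/-- A path of maximum length among all paths of the graph, whatever their ends. -/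
structure IsLongestPath (p : G.Walk u v) : Prop where
  isPath : p.IsPath
  length_le_length : ∀ ⦃a b : V⦄ (q : G.Walk a b), q.IsPath → q.length ≤ p.length

namespace IsLongestPath

theorem mem_support_of_adj {p : G.Walk w v} (hp : IsLongestPath p) (hwc : G.Adj w c) :
    c ∈ p.support := by
  by_contra hc
  have hlonger := hp.length_le_length _ (hp.isPath.cons hc (h := hwc.symm))
  simp at hlonger

theorem replace_start {hwu : G.Adj w u} {q : G.Walk u v} (hp : IsLongestPath (q.cons hwu))
    (hcu : G.Adj c u) (hc : c ∉ q.support) : IsLongestPath (q.cons hcu) :=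
  ⟨hp.isPath.of_cons.cons hc, hp.length_le_length⟩

theorem exists_eq_cons_cons {p : G.Walk w v} (hp : IsLongestPath p)
    (hw : (G.neighborSet w).Nontrivial) :
    ∃ (u x : V) (hwu : G.Adj w u) (hux : G.Adj u x) (r : G.Walk x v),
      p = (r.cons hux).cons hwu := by
  cases p with
  | nil =>
    obtain ⟨a, hwa⟩ := hw.nonempty
    exact absurd (by simpa using hp.mem_support_of_adj hwa) hwa.ne'
  | cons hwu q =>
    cases q with
    | nil =>
      obtain ⟨a, hwa, hav⟩ := hw.exists_ne v
      exact absurd (by simpa [hwa.ne'] using hp.mem_support_of_adj hwa) hav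
    | cons hux r => exact ⟨_, _, hwu, hux, r, rfl⟩

section ConsCons

variable {hwu : G.Adj w u} {hux : G.Adj u x} {r : G.Walk x v}

theorem mem_support_or_exists_adj (hp : IsLongestPath ((r.cons hux).cons hwu))
    (hcw : c ≠ w) (hcu : c ≠ u) (hc : (G.neighborSet c).Nontrivial)
    (hadj : G.Adj c w ∨ G.Adj c u) :
    c ∈ r.support ∨ ∃ d ∈ r.support, G.Adj c d := by
  rcases hadj with hcw' | hcu'
  · left
    simpa [hcw, hcu] using hp.mem_support_of_adj hcw'.symm
  · refine or_iff_not_imp_left.2 fun hcr ↦ ?_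
    have hp' : IsLongestPath ((r.cons hux).cons hcu') :=
      hp.replace_start hcu' (by simp [hcu, hcr])
    obtain ⟨d, hcd, hdu⟩ := hc.exists_ne u
    exact ⟨d, by simpa [hcd.ne', hdu] using hp'.mem_support_of_adj hcd, hcd⟩

theorem connected_induce_ne_ne (hp : IsLongestPath ((r.cons hux).cons hwu))
    (hG : G.Preconnected) (hdeg : ∀ y, (G.neighborSet y).Nontrivial) :
    (G.induce {y | y ≠ w ∧ y ≠ u}).Connected := by
  have hr : ∀ y ∈ r.support, y ∈ {y | y ≠ w ∧ y ≠ u} := by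
    have hnodup := hp.isPath.support_nodup
    simp only [Walk.support_cons, List.nodup_cons, List.mem_cons, not_or] at hnodup
    exact fun y hy ↦
      ⟨ne_of_mem_of_not_mem hy hnodup.1.2, ne_of_mem_of_not_mem hy hnodup.2.1⟩
  rw [connected_iff_exists_forall_reachable]
  refine ⟨⟨x, hr x r.start_mem_support⟩, fun y ↦ ?_⟩
  obtain ⟨⟨c, hcw, hcu⟩, hyc, a, ha, hca⟩ :=
    exists_reachable_induce_adj_notMem hG (w := w) (by simp) y
  have hca' : G.Adj c w ∨ G.Adj c u := by
    obtain rfl | rfl : a = w ∨ a = u := by simpa [or_iff_not_imp_left] using ha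
    exacts [.inl hca, .inr hca]
  refine Reachable.trans ?_ hyc.symm
  obtain hc | ⟨d, hd, hcd⟩ := hp.mem_support_or_exists_adj hcw hcu (hdeg c) hca'
  · exact reachable_induce_of_mem_support r hr hc
  · exact (reachable_induce_of_mem_support r hr hd).trans
      (Adj.reachable (induce_adj.2 hcd.symm))

theorem connected_induce_ne (hp : IsLongestPath ((r.cons hux).cons hwu))
    (hG : G.Preconnected) (hdeg : ∀ y, (G.neighborSet y).Nontrivial) :
    (G.induce {y | y ≠ w}).Connected := by
  have hxw : x ≠ w := by
    rintro rfl
    simpa using hp.isPath.support_nodup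
  have hinsert : {y | y ≠ w} = insert u {y | y ≠ w ∧ y ≠ u} := by
    ext y
    by_cases hyu : y = u <;> simp [hyu, hwu.ne']
  rw [hinsert]
  exact connected_induce_insert_of_adj (hp.connected_induce_ne_ne hG hdeg).preconnected
    ⟨hxw, hux.ne'⟩ hux

end ConsCons

end IsLongestPath

theorem stmt18_general {p : G.Walk w v} (hp : IsLongestPath p) (hG : G.Preconnected)
    (hdeg : ∀ y, (G.neighborSet y).Nontrivial) :
    ∃ u : V, G.Adj w u ∧ (G.induce {x : V | x ≠ w}).Connected ∧
      (G.induce {x : V | x ≠ w ∧ x ≠ u}).Connected := by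
  obtain ⟨u, _, hwu, _, _, rfl⟩ := hp.exists_eq_cons_cons (hdeg w)
  exact ⟨u, hwu, hp.connected_induce_ne hG hdeg, hp.connected_induce_ne_ne hG hdeg⟩

end LongestPath

/-- In a connected Eulerian graph with at least 3 vertices there are adjacent vertices
`w, u` such that both `G - w` and `G - {w, u}` are connected. -/
theorem stmt18 {V : Type*} [Fintype V] (G : SimpleGraph V)
    (hconn : G.Connected) (heul : ∀ v : V, Even (G.neighborSet v).ncard)
    (hcard : 3 ≤ Fintype.card V) :
    ∃ w u : V, G.Adj w u ∧ (G.induce {x : V | x ≠ w}).Connected ∧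
      (G.induce {x : V | x ≠ w ∧ x ≠ u}).Connected := by
  have : Nontrivial V := Fintype.one_lt_card_iff_nontrivial.1 (by lia)
  obtain ⟨w, _, p, hp, hmax⟩ := Walk.exists_isPath_forall_isPath_length_le_length G
  exact ⟨w, stmt18_general ⟨hp, hmax⟩ hconn.preconnected fun v ↦
    neighborSet_nontrivial_of_even_ncard hconn.preconnected (heul v)⟩
end

section
/- Let G be a connected simple graph that is neither a cycle nor a complete graph. Then there exist two nonadjacent vertices x and y in G such that G − {x, y} is connected. -/
/-!
Let `u` be a vertex whose degree is not two. If `u` is universal, every nonadjacent pair avoids `u`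
and may be deleted. Otherwise let `v` be a vertex not adjacent to `u`.

A cut vertex `w` of a connected graph yields a pair at once: take, on two sides of the cut, vertices
`x` and `y` farthest from `w`. They are nonadjacent, and every other vertex still descends to `w`
along a shortest path, since such a path never climbs to `x` or `y`. So suppose that there is no
cut vertex; then `u` has degree at least three. Either `{u, v}` may be deleted, or `v` is a cut
vertex of `G - u`, which gives a pair `{x, y}` for `G - u`; as `u` has a neighbour other than `x`
and `y`, the same pair works for `G`.
-/

section

open SimpleGraph

variable {V : Type*} {G : SimpleGraph V} {u v w : V}

theorem connected_induce_compl_pair_of_isUniversal {x y : V} (hu : G.IsUniversal u) (hxy : x ≠ y)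
    (hadj : ¬ G.Adj x y) : (G.induce {x, y}ᶜ).Connected := by
  have huxy : u ∉ ({x, y} : Set V) := by
    rintro (rfl | rfl)
    exacts [hadj (hu hxy), hadj (hu hxy.symm).symm]
  exact Connected.of_isUniversal (v := ⟨u, huxy⟩) fun _ hne ↦ hu (Subtype.coe_ne_coe.2 hne)

theorem preconnected_induce_induce_iff {s : Set V} {t : Set s} :
    ((G.induce s).induce t).Preconnected ↔ (G.induce (Subtype.val '' t)).Preconnected := by
  let f : (G.induce s).induce t ↪g G := (Embedding.induce s).comp (Embedding.induce t)
  have hrange : Set.range f = Subtype.val '' t :=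
    (Set.range_comp Subtype.val Subtype.val).trans (congrArg _ Subtype.range_coe)
  rw [f.isoInduceRange.preconnected_iff, hrange]

theorem exists_separation_of_not_preconnected_induce {s : Set V}
    (h : ¬ (G.induce s).Preconnected) :
    ∃ A B : Set V, A.Nonempty ∧ B.Nonempty ∧ A ∪ B = s ∧ Disjoint A B ∧
      ∀ a ∈ A, ∀ b ∈ B, ¬ G.Adj a b := by
  simp only [Preconnected, not_forall] at h
  obtain ⟨a, b, hab⟩ := h
  let C : Set s := {c | (G.induce s).Reachable a c}
  refine ⟨Subtype.val '' C, Subtype.val '' Cᶜ, ⟨a, a, .refl a, rfl⟩, ⟨b, b, hab, rfl⟩, ?_, ?_, ?_⟩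
  · rw [← Set.image_union, Set.union_compl_self, Set.image_univ, Subtype.range_coe]
  · exact (Set.disjoint_image_iff Subtype.val_injective).2 disjoint_compl_right
  · rintro _ ⟨c, hc, rfl⟩ _ ⟨d, hd, rfl⟩ hcd
    exact hd (hc.trans (Adj.reachable (G := G.induce s) hcd))

theorem exists_adj_dist_lt (h : G.Reachable w v) (hne : w ≠ v) :
    ∃ z, G.Adj w z ∧ G.dist z v < G.dist w v := by
  obtain ⟨p, hp⟩ := h.exists_walk_length_eq_dist
  cases p with
  | nil => exact absurd rfl hne
  | cons hadj q =>
    rw [Walk.length_cons] at hp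
    exact ⟨_, hadj, hp ▸ Nat.lt_succ_of_le (dist_le q)⟩

/-- `x` is a local maximum of the distance to `v`, so that no shortest path towards `v` passes
through `x` unless it starts there. -/
def IsDistPeak (G : SimpleGraph V) (v x : V) : Prop :=
  ∀ ⦃w⦄, G.Adj x w → G.dist w v ≤ G.dist x v

theorem exists_isDistPeak_of_neighborSet_subset_insert {s : Set V} (hfin : s.Finite)
    (hne : s.Nonempty) (hs : ∀ x ∈ s, G.neighborSet x ⊆ insert v s) :
    ∃ x ∈ s, IsDistPeak G v x := by
  obtain ⟨x, hxs, hmax⟩ := s.exists_max_image (G.dist · v) hfin hne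
  refine ⟨x, hxs, fun w hxw ↦ ?_⟩
  rcases hs x hxs hxw with rfl | hws
  · simp
  · exact hmax w hws

theorem connected_induce_compl_of_forall_isDistPeak (hG : G.Connected) {s : Set V} (hv : v ∉ s)
    (hs : ∀ x ∈ s, IsDistPeak G v x) : (G.induce sᶜ).Connected := by
  suffices h : ∀ w (hw : w ∉ s), (G.induce sᶜ).Reachable ⟨w, hw⟩ ⟨v, hv⟩ from
    connected_iff_exists_forall_reachable _ |>.2 ⟨⟨v, hv⟩, fun w ↦ (h w w.2).symm⟩
  intro w hw
  induction hd : G.dist w v using Nat.strong_induction_on generalizing w with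
  | _ n ih =>
    subst hd
    by_cases hwv : w = v
    · subst hwv; rfl
    obtain ⟨z, hwz, hlt⟩ := exists_adj_dist_lt (hG w v) hwv
    have hz : z ∉ s := fun hz ↦ (hs z hz hwz.symm).not_gt hlt
    have hadj : (G.induce sᶜ).Adj ⟨w, hw⟩ ⟨z, hz⟩ := hwz
    exact hadj.reachable.trans (ih _ hlt z hz rfl)

theorem exists_not_adj_connected_induce_compl_pair_of_cut_vertex [Finite V] (hG : G.Connected)
    (hv : ¬ (G.induce {v}ᶜ).Preconnected) :
    ∃ x y, x ≠ y ∧ ¬ G.Adj x y ∧ (G.induce {x, y}ᶜ).Connected := by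
  obtain ⟨A, B, hA, hB, hAB, hdisj, hsep⟩ := exists_separation_of_not_preconnected_induce hv
  have hcover (z : V) : z ∈ A ∨ z ∈ B ↔ z ≠ v := Set.ext_iff.1 hAB z
  obtain ⟨x, hxA, hx⟩ : ∃ x ∈ A, IsDistPeak G v x :=
    exists_isDistPeak_of_neighborSet_subset_insert A.toFinite hA fun a ha z haz ↦
      or_iff_not_imp_left.2 fun hz ↦ ((hcover z).2 hz).resolve_right fun hzB ↦ hsep a ha z hzB haz
  obtain ⟨y, hyB, hy⟩ : ∃ y ∈ B, IsDistPeak G v y :=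
    exists_isDistPeak_of_neighborSet_subset_insert B.toFinite hB fun b hb z hbz ↦
      or_iff_not_imp_left.2 fun hz ↦
        ((hcover z).2 hz).resolve_left fun hzA ↦ hsep z hzA b hb hbz.symm
  have hvxy : v ∉ ({x, y} : Set V) := by
    rintro (rfl | rfl)
    exacts [(hcover v).1 (.inl hxA) rfl, (hcover v).1 (.inr hyB) rfl]
  refine ⟨x, y, hdisj.ne_of_mem hxA hyB, hsep x hxA y hyB,
    connected_induce_compl_of_forall_isDistPeak hG hvxy ?_⟩
  rintro _ (rfl | rfl)
  exacts [hx, hy]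

theorem exists_not_adj_connected_induce_compl_pair_of_cut_pair [Finite V]
    (hu : (G.induce {u}ᶜ).Connected) (hdeg : 2 < (G.neighborSet u).ncard) (hvu : v ≠ u)
    (huv : ¬ (G.induce {u, v}ᶜ).Preconnected) :
    ∃ x y, x ≠ y ∧ ¬ G.Adj x y ∧ (G.induce {x, y}ᶜ).Connected := by
  have hcut : ¬ ((G.induce {u}ᶜ).induce {⟨v, hvu⟩}ᶜ).Preconnected := by
    have himage : Subtype.val '' ({⟨v, hvu⟩}ᶜ : Set ({u}ᶜ : Set V)) = {u, v}ᶜ := by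
      ext; simp
    rwa [preconnected_induce_induce_iff, himage]
  obtain ⟨⟨x, hxu⟩, ⟨y, hyu⟩, hne, hadj, hconn⟩ :=
    exists_not_adj_connected_induce_compl_pair_of_cut_vertex hu hcut
  have hxy : x ≠ y := fun h ↦ hne (Subtype.ext h)
  obtain ⟨s, hus, hs⟩ : ∃ s ∈ G.neighborSet u, s ∉ ({x, y} : Set V) :=
    Set.exists_mem_notMem_of_ncard_lt_ncard (by rwa [Set.ncard_pair hxy])
  refine ⟨x, y, hxy, hadj, ?_⟩
  have hdelete := preconnected_induce_induce_iff.1 hconn.preconnected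
  have hunion : {u} ∪ Subtype.val '' ({⟨x, hxu⟩, ⟨y, hyu⟩}ᶜ : Set ({u}ᶜ : Set V)) = {x, y}ᶜ := by
    ext z
    by_cases hz : z = u
    · simp [hz, Ne.symm hxu, Ne.symm hyu]
    · simp [hz, eq_comm]
  rw [← hunion]
  exact connected_induce_union .of_subsingleton hdelete rfl
    ⟨⟨s, hus.ne'⟩, by simpa [Subtype.ext_iff] using hs, rfl⟩ hus

theorem nontrivial_neighborSet_of_forall_preconnected_induce_compl (hG : G.Preconnected)
    (huv : u ≠ v) (hadj : ¬ G.Adj u v) (h : ∀ w, (G.induce {w}ᶜ).Preconnected) :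
    (G.neighborSet u).Nontrivial := by
  have : Nontrivial V := ⟨u, v, huv⟩
  obtain ⟨w, huw⟩ := hG.exists_adj_of_nontrivial u
  have hvw : v ≠ w := fun hvw ↦ hadj (hvw ▸ huw)
  have : Nontrivial ({w}ᶜ : Set V) :=
    ⟨⟨u, huw.ne⟩, ⟨v, hvw⟩, fun heq ↦ huv (congrArg Subtype.val heq)⟩
  obtain ⟨⟨z, hzw⟩, huz⟩ := (h w).exists_adj_of_nontrivial ⟨u, huw.ne⟩
  exact ⟨z, huz, w, huw, hzw⟩

end

/-- A connected graph that is neither a cycle (i.e. not 2-regular) nor a complete graph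
has two nonadjacent vertices `x, y` such that `G - {x, y}` is connected. -/
theorem stmt19 {V : Type*} [Fintype V] (G : SimpleGraph V)
    (hconn : G.Connected)
    (hcycle : ¬ (∀ v : V, (G.neighborSet v).ncard = 2))
    (hcomplete : ¬ (∀ x y : V, x ≠ y → G.Adj x y)) :
    ∃ x y : V, x ≠ y ∧ ¬ G.Adj x y ∧
      (G.induce {v : V | v ≠ x ∧ v ≠ y}).Connected := by
  suffices h : ∃ x y, x ≠ y ∧ ¬ G.Adj x y ∧ (G.induce {x, y}ᶜ).Connected by
    obtain ⟨x, y, hne, hadj, hxy⟩ := h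
    have hcompl : {v | v ≠ x ∧ v ≠ y} = ({x, y}ᶜ : Set V) := by ext; simp
    exact ⟨x, y, hne, hadj, hcompl ▸ hxy⟩
  push Not at hcycle hcomplete
  obtain ⟨u, hu⟩ := hcycle
  by_cases huniv : G.IsUniversal u
  · obtain ⟨p, q, hpq, hadj⟩ := hcomplete
    exact ⟨p, q, hpq, hadj, connected_induce_compl_pair_of_isUniversal huniv hpq hadj⟩
  obtain ⟨v, huv, hadj⟩ : ∃ v, u ≠ v ∧ ¬ G.Adj u v := by simpa [SimpleGraph.IsUniversal] using huniv
  by_cases! hcut : ∃ w, ¬ (G.induce {w}ᶜ).Preconnected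
  · exact exists_not_adj_connected_induce_compl_pair_of_cut_vertex hconn hcut.choose_spec
  have hnontriv := nontrivial_neighborSet_of_forall_preconnected_induce_compl
    hconn.preconnected huv hadj hcut
  by_cases hpair : (G.induce {u, v}ᶜ).Preconnected
  · obtain ⟨t, hut, htv⟩ := hnontriv.exists_ne v
    exact ⟨u, v, huv, hadj, (SimpleGraph.connected_iff _).2 ⟨hpair, t, by simp [hut.ne', htv]⟩⟩
  · have hdeg : 2 < (G.neighborSet u).ncard :=
      lt_of_le_of_ne (Set.one_lt_ncard_iff_nontrivial.2 hnontriv) hu.symm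
    exact exists_not_adj_connected_induce_compl_pair_of_cut_pair
      ((SimpleGraph.connected_iff _).2 ⟨hcut u, v, huv.symm⟩) hdeg huv.symm hpair
end
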